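/- arXiv:2108.05831 — 2 statements merged into one kernel-verified Lean document; each statement's English description precedes it below -/
import Mathlib

section
/- Fix 2 ≤ k ≤ n. For every μ ∈ ℝⁿ: the infimum over γ ∈ Γ_k with σ_k(γ) = 1 of Σᵢ μᵢ·σ_{k−1,i}(γ) equals k·σ_k(μ)^{1/k} if μ ∈ closure(Γ_k), and equals −∞ otherwise. -/
/-- The `j`-th elementary symmetric polynomial of `x : Fin n → ℝ`. -/
def esymm (n j : ℕ) (x : Fin n → ℝ) : ℝ :=
  ∑ s ∈ Finset.powersetCard j (Finset.univ : Finset (Fin n)), ∏ i ∈ s, x i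

open Polynomial in
theorem splits_derivative_of_splits {p : ℝ[X]} (hp : p.Splits) : (derivative p).Splits := by
  rw [splits_iff_card_roots] at hp ⊢
  by_cases h0 : p.natDegree = 0
  · rw [natDegree_eq_zero] at h0
    obtain ⟨c, rfl⟩ := h0
    simp
  · have h1 := card_roots_le_derivative p
    have h2 := card_roots' (derivative p)
    have h3 := natDegree_derivative_lt h0
    omega

open Polynomial in
theorem eval_mul_eval_derivative_derivative_le {p : ℝ[X]} (hp : p.Splits) (t : ℝ) :
    p.eval t * (derivative (derivative p)).eval t ≤ (derivative p).eval t ^ 2 := by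
  obtain ⟨m, hm⟩ := splits_iff_exists_multiset.mp hp
  suffices h : ∀ q : ℝ[X], q = (m.map (X - C ·)).prod →
      q.eval t * (derivative (derivative q)).eval t ≤ (derivative q).eval t ^ 2 by
    have h' := mul_le_mul_of_nonneg_left (h _ rfl) (sq_nonneg p.leadingCoeff)
    generalize p.leadingCoeff = a at *
    subst hm
    simp only [derivative_C_mul, eval_mul, eval_C]
    linarith
  clear hm
  induction m using Multiset.induction_on with
  | empty => rintro q rfl; simp
  | cons a m ih =>
    rintro q rfl
    have h := ih _ rfl
    simp only [Multiset.map_cons, Multiset.prod_cons, derivative_mul, derivative_add,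
      derivative_sub, derivative_X, derivative_C, sub_zero, one_mul, eval_add, eval_mul,
      eval_sub, eval_X, eval_C]
    nlinarith [mul_le_mul_of_nonneg_left h (sq_nonneg (t - a)),
      sq_nonneg (eval t (m.map (X - C ·)).prod)]

open Polynomial in
theorem coeff_mul_coeff_le_of_splits {p : ℝ[X]} (hp : p.Splits) (m : ℕ) :
    p.coeff m * p.coeff (m + 2) ≤ p.coeff (m + 1) ^ 2 := by
  have hs : (derivative^[m] p).Splits := by
    induction m with
    | zero => exact hp
    | succ m ih =>
      rw [Function.iterate_succ_apply']
      exact splits_derivative_of_splits ih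
  have h := eval_mul_eval_derivative_derivative_le hs 0
  simp only [← Function.iterate_succ_apply' (⇑derivative)] at h
  simp only [← coeff_zero_eq_eval_zero, coeff_iterate_derivative, zero_add,
    Nat.descFactorial_self, nsmul_eq_mul] at h
  push_cast [Nat.factorial_succ] at h
  have hf : (0 : ℝ) < m.factorial := by positivity
  by_cases hc : p.coeff m * p.coeff (m + 2) ≤ 0
  · exact hc.trans (sq_nonneg _)
  push Not at hc
  have h2 : (m.factorial : ℝ) ^ 2 * (m + 1) * ((m + 2) * (p.coeff m * p.coeff (m + 2)))
      ≤ (m.factorial : ℝ) ^ 2 * (m + 1) * ((m + 1) * p.coeff (m + 1) ^ 2) := by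
    have e : (m + 1 + 1 : ℝ) = m + 2 := by ring
    rw [e] at h
    linarith
  have h3 := le_of_mul_le_mul_left h2 (by positivity)
  nlinarith [(Nat.cast_nonneg m : (0 : ℝ) ≤ m)]

theorem esymm_zero (n : ℕ) (x : Fin n → ℝ) : esymm n 0 x = 1 := by
  simp [esymm]

theorem esymm_one (n : ℕ) (x : Fin n → ℝ) : esymm n 1 x = ∑ i, x i := by
  simp [esymm, Finset.powersetCard_one]

theorem esymm_eq_zero_of_lt {n j : ℕ} (h : n < j) (x : Fin n → ℝ) : esymm n j x = 0 := by
  rw [esymm, Finset.powersetCard_eq_empty.mpr (by simpa using h), Finset.sum_empty]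

theorem esymm_smul (n j : ℕ) (c : ℝ) (x : Fin n → ℝ) :
    esymm n j (c • x) = c ^ j * esymm n j x := by
  rw [esymm, esymm, Finset.mul_sum]
  refine Finset.sum_congr rfl fun s hs => ?_
  simp [Finset.prod_mul_distrib, (Finset.mem_powersetCard.mp hs).2]

theorem continuous_esymm (n j : ℕ) : Continuous (esymm n j) := by
  unfold esymm
  fun_prop

theorem esymm_update_zero (n j : ℕ) (x : Fin n → ℝ) (i : Fin n) :
    esymm n j (Function.update x i 0) =
      ∑ s ∈ Finset.powersetCard j (Finset.univ : Finset (Fin n)),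
        if i ∈ s then 0 else ∏ l ∈ s, x l := by
  refine Finset.sum_congr rfl fun s _ => ?_
  split_ifs with h
  · exact Finset.prod_eq_zero h (by simp)
  · exact Finset.prod_update_of_notMem h x 0

theorem esymm_update_zero' (n j : ℕ) (x : Fin n → ℝ) (i : Fin n) :
    esymm n j (Function.update x i 0) =
      ∑ s ∈ Finset.powersetCard j (Finset.univ.erase i), ∏ l ∈ s, x l := by
  rw [esymm_update_zero, ← Finset.sum_filter_add_sum_filter_not _ (fun s => i ∈ s)]
  rw [Finset.sum_eq_zero (fun s hs => if_pos (Finset.mem_filter.mp hs).2), zero_add]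
  refine Finset.sum_congr ?_ fun s hs => if_neg ?_
  · ext s
    simp only [Finset.mem_filter, Finset.mem_powersetCard, Finset.subset_erase]
    tauto
  · exact (Finset.subset_erase.mp (Finset.mem_powersetCard.mp hs).1).2

theorem esymm_succ (n j : ℕ) (x : Fin n → ℝ) (i : Fin n) :
    esymm n (j + 1) x = esymm n (j + 1) (Function.update x i 0)
      + x i * esymm n j (Function.update x i 0) := by
  have hi : i ∉ Finset.univ.erase i := by simp
  rw [esymm_update_zero', esymm_update_zero', esymm,
    ← Finset.insert_erase (Finset.mem_univ i), Finset.powersetCard_succ_insert hi,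
    Finset.sum_union, Finset.sum_image, Finset.erase_insert hi, Finset.mul_sum]
  · congr 1
    refine Finset.sum_congr rfl fun s hs => Finset.prod_insert fun h => ?_
    exact hi ((Finset.mem_powersetCard.mp hs).1 h)
  · intro s hs t ht hst
    have h1 : i ∉ s := fun h => hi ((Finset.mem_powersetCard.mp hs).1 h)
    have h2 : i ∉ t := fun h => hi ((Finset.mem_powersetCard.mp ht).1 h)
    rw [← Finset.erase_insert h1, ← Finset.erase_insert h2]
    exact congrArg (fun u => Finset.erase u i) hst
  · rw [Finset.disjoint_left]
    intro s hs hs'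
    obtain ⟨t, -, rfl⟩ := Finset.mem_image.mp hs'
    exact hi ((Finset.mem_powersetCard.mp hs).1 (Finset.mem_insert_self i t))

theorem sum_esymm_update (n j : ℕ) (x : Fin n → ℝ) :
    ∑ i, esymm n j (Function.update x i 0) = ((n : ℝ) - j) * esymm n j x := by
  simp_rw [esymm_update_zero]
  rw [Finset.sum_comm, esymm, Finset.mul_sum]
  refine Finset.sum_congr rfl fun s hs => ?_
  have hc := (Finset.mem_powersetCard.mp hs).2
  have hle : s.card ≤ n := by simpa using Finset.card_le_univ s
  have : (Finset.univ.filter (fun i => i ∉ s)) = sᶜ := by ext; simp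
  simp only [← ite_not (p := _ ∈ s), Finset.sum_ite, Finset.sum_const_zero, add_zero,
    Finset.sum_const, this, Finset.card_compl, Fintype.card_fin, nsmul_eq_mul]
  rw [Nat.cast_sub hle, hc]

theorem sum_mul_esymm_update (n j : ℕ) (x : Fin n → ℝ) :
    ∑ i, x i * esymm n j (Function.update x i 0) = ((j : ℝ) + 1) * esymm n (j + 1) x := by
  have h : ∀ i, x i * esymm n j (Function.update x i 0) =
      esymm n (j + 1) x - esymm n (j + 1) (Function.update x i 0) := fun i => by
    rw [esymm_succ n j x i]; ring
  simp_rw [h, Finset.sum_sub_distrib, sum_esymm_update]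
  simp only [Finset.sum_const, Finset.card_univ, Fintype.card_fin, nsmul_eq_mul]
  push_cast
  ring

open Polynomial in
theorem coeff_prod_X_add_C (n j : ℕ) (hj : j ≤ n) (x : Fin n → ℝ) :
    (∏ i, (X + C (x i))).coeff (n - j) = esymm n j x := by
  rw [Finset.prod_X_add_C_coeff _ _ (by simp)]
  simp [esymm, Nat.sub_sub_self hj]

open Polynomial in
theorem esymm_mul_esymm_le (n j : ℕ) (x : Fin n → ℝ) :
    esymm n j x * esymm n (j + 2) x ≤ esymm n (j + 1) x ^ 2 := by
  by_cases h : n < j + 2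
  · rw [esymm_eq_zero_of_lt h, mul_zero]
    positivity
  have hs : (∏ i, (X + C (x i))).Splits := Splits.prod fun i _ => Splits.X_add_C _
  have := coeff_mul_coeff_le_of_splits hs (n - (j + 2))
  rw [show n - (j + 2) + 1 = n - (j + 1) by omega, show n - (j + 2) + 2 = n - j by omega,
    coeff_prod_X_add_C n _ (by omega), coeff_prod_X_add_C n _ (by omega),
    coeff_prod_X_add_C n _ (by omega)] at this
  linarith

open Polynomial in
theorem esymm_add_const (n j : ℕ) (hj : j ≤ n) (x : Fin n → ℝ) (ε : ℝ) :
    esymm n j (fun i => x i + ε) =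
      ∑ i ∈ Finset.range (j + 1), ((n - i).choose (n - j) : ℝ) * ε ^ (j - i) * esymm n i x := by
  have h1 : (∏ i, (X + C (x i + ε))) = (∏ i, (X + C (x i))).comp (X + C ε) := by
    simp only [prod_comp, add_comp, X_comp, C_comp, C_add]
    exact Finset.prod_congr rfl fun i _ => by ring
  have h2 : (∏ i, (X + C (x i))) =
      ∑ i ∈ Finset.range (n + 1), C (esymm n i x) * X ^ (n - i) := by
    have := Multiset.prod_X_add_C_eq_sum_esymm (Finset.univ.val.map x)
    simp only [Multiset.map_map, Multiset.card_map, Finset.card_val, Finset.card_univ,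
      Fintype.card_fin, Finset.esymm_map_val] at this
    exact this
  rw [← coeff_prod_X_add_C n j hj, h1, h2]
  simp only [Polynomial.sum_comp, finsetSum_coeff, mul_comp, C_comp, pow_comp, X_comp, coeff_C_mul,
    coeff_X_add_C_pow]
  symm
  rw [← Finset.sum_subset (Finset.range_subset_range.mpr (by omega : j + 1 ≤ n + 1))]
  · refine Finset.sum_congr rfl fun i hi => ?_
    rw [Finset.mem_range] at hi
    rw [show n - i - (n - j) = j - i by omega]
    ring
  · intro i hi hi'
    rw [Finset.mem_range] at hi hi'
    rw [Nat.choose_eq_zero_of_lt (by omega)]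
    simp

theorem hasDerivAt_esymm_add_smul (n k : ℕ) (γ μ : Fin n → ℝ) :
    HasDerivAt (fun s : ℝ => esymm n (k + 1) (γ + s • μ))
      (∑ i, μ i * esymm n k (Function.update γ i 0)) 0 := by
  have h1 : ∀ t ∈ Finset.powersetCard (k + 1) (Finset.univ : Finset (Fin n)),
      HasDerivAt (fun s : ℝ => ∏ i ∈ t, (γ + s • μ) i)
        (∑ i, if i ∈ t then μ i * ∏ l ∈ t.erase i, γ l else 0) 0 := by
    intro t _
    have := HasDerivAt.fun_finsetProd (u := t) (f := fun i (s : ℝ) => (γ + s • μ) i)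
      (f' := fun i => μ i) (x := 0) (fun i _ => by
        simpa using ((hasDerivAt_id (0 : ℝ)).mul_const (μ i)).const_add (γ i))
    refine this.congr_deriv ?_
    rw [← Finset.sum_filter, Finset.filter_mem_eq_inter, Finset.univ_inter]
    refine Finset.sum_congr rfl fun i _ => ?_
    simp [mul_comm]
  refine (HasDerivAt.fun_sum h1).congr_deriv ?_
  rw [Finset.sum_comm]
  refine Finset.sum_congr rfl fun i _ => ?_
  have h2 := esymm_succ n k (Function.update γ i 1) i
  simp only [Function.update_idem, Function.update_self, one_mul] at h2
  rw [eq_comm, ← sub_eq_iff_eq_add'.mpr h2, esymm, esymm, ← Finset.sum_sub_distrib,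
    Finset.mul_sum]
  refine Finset.sum_congr rfl fun t _ => ?_
  split_ifs with hi
  · rw [Finset.prod_update_of_mem hi, Finset.prod_update_of_mem hi, Finset.sdiff_singleton_eq_erase]
    ring
  · rw [Finset.prod_update_of_notMem hi, Finset.prod_update_of_notMem hi]
    ring

/-- The Gårding cone of vectors whose first `k` elementary symmetric polynomials are positive. -/
def gardingCone (n k : ℕ) : Set (Fin n → ℝ) :=
  {x | ∀ j ≤ k, 0 < esymm n j x}

theorem gardingCone_anti {n k l : ℕ} (h : k ≤ l) : gardingCone n l ⊆ gardingCone n k :=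
  fun _ hx j hj => hx j (hj.trans h)

theorem mem_gardingCone_succ {n k : ℕ} {x : Fin n → ℝ} :
    x ∈ gardingCone n (k + 1) ↔ x ∈ gardingCone n k ∧ 0 < esymm n (k + 1) x := by
  refine ⟨fun h => ⟨gardingCone_anti k.le_succ h, h _ le_rfl⟩, fun h j hj => ?_⟩
  rcases hj.lt_or_eq with hj | rfl
  · exact h.1 j (by omega)
  · exact h.2

theorem mem_gardingCone_zero (n : ℕ) (x : Fin n → ℝ) : x ∈ gardingCone n 0 := by
  intro j hj
  rw [Nat.le_zero.mp hj, esymm_zero]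
  exact one_pos

theorem mem_gardingCone_iff {n k : ℕ} {x : Fin n → ℝ} :
    x ∈ gardingCone n k ↔ ∀ j, 1 ≤ j → j ≤ k → 0 < esymm n j x := by
  refine ⟨fun h j _ hj => h j hj, fun h j hj => ?_⟩
  rcases Nat.eq_zero_or_pos j with rfl | hj0
  · rw [esymm_zero]; exact one_pos
  · exact h j hj0 hj

theorem smul_mem_gardingCone {n k : ℕ} {x : Fin n → ℝ} (hx : x ∈ gardingCone n k) {c : ℝ}
    (hc : 0 < c) : c • x ∈ gardingCone n k := fun j hj => by
  rw [esymm_smul]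
  exact mul_pos (pow_pos hc j) (hx j hj)

theorem update_mem_gardingCone {n k : ℕ} {x : Fin n → ℝ} (hx : x ∈ gardingCone n (k + 1))
    (i : Fin n) : Function.update x i 0 ∈ gardingCone n k := by
  induction k with
  | zero => exact mem_gardingCone_zero _ _
  | succ k ih =>
    have hu := ih (gardingCone_anti (k + 1).le_succ hx)
    refine mem_gardingCone_succ.mpr ⟨hu, ?_⟩
    by_contra! hB
    have hA := hu k le_rfl
    have h1 := hx (k + 1) (by omega)
    have h2 := hx (k + 1 + 1) le_rfl
    rw [esymm_succ n _ x i] at h1 h2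
    have hN := esymm_mul_esymm_le n k (Function.update x i 0)
    nlinarith [mul_pos hA h2]

theorem esymm_div_eq_sum {n m : ℕ} {x : Fin n → ℝ} (hx : x ∈ gardingCone n (m + 1)) :
    ((m : ℝ) + 2) * (esymm n (m + 2) x / esymm n (m + 1) x) =
      ∑ i, (x i - x i ^ 2 / (x i + esymm n (m + 1) (Function.update x i 0) /
        esymm n m (Function.update x i 0))) := by
  have hE := hx (m + 1) le_rfl
  have h := sum_mul_esymm_update n (m + 1) x
  push_cast at h
  rw [show (m : ℝ) + 2 = m + 1 + 1 by ring, ← mul_div_assoc, ← h, Finset.sum_div]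
  refine Finset.sum_congr rfl fun i _ => ?_
  have hu := update_mem_gardingCone hx i m le_rfl
  rw [esymm_succ n m x i] at hE ⊢
  have h3 : x i + esymm n (m + 1) (Function.update x i 0) / esymm n m (Function.update x i 0) =
      (esymm n (m + 1) (Function.update x i 0) + x i * esymm n m (Function.update x i 0)) /
        esymm n m (Function.update x i 0) := by
    field_simp
    ring
  rw [h3]
  field_simp
  ring

theorem add_sq_div_le_of_add_le {a b c d e : ℝ} (hc : 0 < c) (hd : 0 < d) (h : c + d ≤ e) :
    (a + b) ^ 2 / e ≤ a ^ 2 / c + b ^ 2 / d := by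
  refine (div_le_div_of_nonneg_left (sq_nonneg _) (add_pos hc hd) h).trans ?_
  rw [div_add_div _ _ hc.ne' hd.ne', div_le_div_iff₀ (add_pos hc hd) (mul_pos hc hd)]
  nlinarith [sq_nonneg (a * d - b * c)]

theorem add_mem_gardingCone_and_esymm_div_superadditive {n k : ℕ} {x y : Fin n → ℝ}
    (hx : x ∈ gardingCone n k) (hy : y ∈ gardingCone n k) :
    x + y ∈ gardingCone n k ∧
      esymm n (k + 1) x / esymm n k x + esymm n (k + 1) y / esymm n k y ≤
        esymm n (k + 1) (x + y) / esymm n k (x + y) := by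
  induction k generalizing x y with
  | zero =>
    refine ⟨mem_gardingCone_zero _ _, ?_⟩
    simp [esymm_zero, esymm_one, Finset.sum_add_distrib]
  | succ m ih =>
    obtain ⟨hx', hx0⟩ := mem_gardingCone_succ.mp hx
    obtain ⟨hy', hy0⟩ := mem_gardingCone_succ.mp hy
    obtain ⟨hxy', hs⟩ := ih hx' hy'
    have hxy : x + y ∈ gardingCone n (m + 1) := by
      refine mem_gardingCone_succ.mpr ⟨hxy', ?_⟩
      have h1 := div_pos hx0 (hx' m le_rfl)
      have h2 := div_pos hy0 (hy' m le_rfl)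
      exact (div_pos_iff_of_pos_right (hxy' m le_rfl)).mp (by linarith)
    refine ⟨hxy, ?_⟩
    have hm : (0 : ℝ) < (m : ℝ) + 2 := by positivity
    refine le_of_mul_le_mul_left ?_ hm
    rw [mul_add, esymm_div_eq_sum hx, esymm_div_eq_sum hy, esymm_div_eq_sum hxy,
      ← Finset.sum_add_distrib]
    refine Finset.sum_le_sum fun i _ => ?_
    have hux := update_mem_gardingCone hx i
    have huy := update_mem_gardingCone hy i
    have hu : Function.update (x + y) i 0 = Function.update x i 0 + Function.update y i 0 := by
      rw [← Function.update_add, add_zero]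
    have hsu := (ih hux huy).2
    rw [← hu] at hsu
    have hpos : ∀ {z : Fin n → ℝ}, z ∈ gardingCone n (m + 1) →
        0 < z i + esymm n (m + 1) (Function.update z i 0) /
          esymm n m (Function.update z i 0) := fun {z} hz => by
      have h1 := hz (m + 1) le_rfl
      have h2 := update_mem_gardingCone hz i m le_rfl
      rw [esymm_succ n m z i] at h1
      have h3 := div_pos h1 h2
      rwa [add_div, mul_div_cancel_right₀ _ h2.ne', add_comm] at h3
    have := add_sq_div_le_of_add_le (a := x i) (b := y i)
      (e := (x + y) i + esymm n (m + 1) (Function.update (x + y) i 0) /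
        esymm n m (Function.update (x + y) i 0)) (hpos hx) (hpos hy)
      (by simp only [Pi.add_apply]; linarith)
    simp only [Pi.add_apply] at this ⊢
    linarith

theorem prod_esymm_div {n k : ℕ} {x : Fin n → ℝ} (hx : x ∈ gardingCone n k) :
    ∏ j ∈ Finset.range k, esymm n (j + 1) x / esymm n j x = esymm n k x := by
  induction k with
  | zero => simp [esymm_zero]
  | succ k ih =>
    have hx' := gardingCone_anti k.le_succ hx
    rw [Finset.prod_range_succ, ih hx', mul_div_cancel₀ _ (hx' k le_rfl).ne']

theorem one_add_sum_le_prod {ι : Type*} (s : Finset ι) (f : ι → ℝ) (hf : ∀ i ∈ s, 0 ≤ f i) :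
    1 + ∑ i ∈ s, f i ≤ ∏ i ∈ s, (1 + f i) := by
  classical
  induction s using Finset.induction_on with
  | empty => simp
  | insert a s ha ih =>
    rw [Finset.sum_insert ha, Finset.prod_insert ha]
    have h1 := ih fun i hi => hf i (Finset.mem_insert_of_mem hi)
    have h2 := hf a (Finset.mem_insert_self a s)
    have h3 := Finset.sum_nonneg fun i hi => hf i (Finset.mem_insert_of_mem hi)
    nlinarith [mul_le_mul_of_nonneg_left h1 (by linarith : 0 ≤ 1 + f a)]

open Filter Topology in
/-- Gårding's inequality, normalised at a point with `esymm n k γ = 1`. -/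
theorem garding_inequality {n k : ℕ} {γ μ : Fin n → ℝ} (hγ : γ ∈ gardingCone n (k + 1))
    (hμ : μ ∈ gardingCone n (k + 1)) (h1 : esymm n (k + 1) γ = 1) :
    ((k : ℝ) + 1) * esymm n (k + 1) μ ^ (1 / ((k : ℝ) + 1)) ≤
      ∑ i, μ i * esymm n k (Function.update γ i 0) := by
  set q : (Fin n → ℝ) → ℕ → ℝ := fun x j => esymm n (j + 1) x / esymm n j x with hq
  have hqpos : ∀ {x}, x ∈ gardingCone n (k + 1) → ∀ j ∈ Finset.range (k + 1), 0 < q x j :=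
    fun hx j hj => by
      rw [Finset.mem_range] at hj
      exact div_pos (hx _ (by omega)) (hx _ (by omega))
  set r : ℕ → ℝ := fun j => q μ j / q γ j with hr
  have hrpos : ∀ j ∈ Finset.range (k + 1), 0 < r j := fun j hj =>
    div_pos (hqpos hμ j hj) (hqpos hγ j hj)
  have hprod : ∏ j ∈ Finset.range (k + 1), r j = esymm n (k + 1) μ := by
    rw [hr, Finset.prod_div_distrib, prod_esymm_div hμ, prod_esymm_div hγ, h1, div_one]
  have hamgm : ((k : ℝ) + 1) * esymm n (k + 1) μ ^ (1 / ((k : ℝ) + 1)) ≤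
      ∑ j ∈ Finset.range (k + 1), r j := by
    have := Real.geom_mean_le_arith_mean (Finset.range (k + 1)) (fun _ => 1) r
      (fun _ _ => zero_le_one) (by simp; positivity) (fun j hj => (hrpos j hj).le)
    simp only [Real.rpow_one, one_mul, Finset.sum_const, Finset.card_range, nsmul_eq_mul,
      mul_one, hprod] at this
    push_cast at this
    rw [le_div_iff₀ (by positivity)] at this
    rw [one_div]
    linarith
  refine hamgm.trans ?_
  have hslope := (hasDerivAt_esymm_add_smul n k γ μ).hasDerivWithinAt (s := Set.Ioi 0)
  rw [hasDerivWithinAt_iff_tendsto_slope' (by simp)] at hslope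
  refine ge_of_tendsto hslope ?_
  filter_upwards [self_mem_nhdsWithin] with s hs
  have hs : 0 < s := hs
  have hsμ := smul_mem_gardingCone hμ hs
  have hsum : γ + s • μ ∈ gardingCone n (k + 1) :=
    (add_mem_gardingCone_and_esymm_div_superadditive hγ hsμ).1
  have hstep : 1 + s * ∑ j ∈ Finset.range (k + 1), r j ≤ esymm n (k + 1) (γ + s • μ) := by
    calc 1 + s * ∑ j ∈ Finset.range (k + 1), r j
        = 1 + ∑ j ∈ Finset.range (k + 1), s * r j := by rw [Finset.mul_sum]
      _ ≤ ∏ j ∈ Finset.range (k + 1), (1 + s * r j) :=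
          one_add_sum_le_prod _ _ fun j hj => (mul_pos hs (hrpos j hj)).le
      _ = (∏ j ∈ Finset.range (k + 1), q γ j) * ∏ j ∈ Finset.range (k + 1), (1 + s * r j) := by
          rw [prod_esymm_div hγ, h1, one_mul]
      _ = ∏ j ∈ Finset.range (k + 1), q γ j * (1 + s * r j) := Finset.prod_mul_distrib.symm
      _ ≤ ∏ j ∈ Finset.range (k + 1), q (γ + s • μ) j := by
          refine Finset.prod_le_prod (fun j hj => ?_) fun j hj => ?_
          · have := hqpos hγ j hj
            have := hrpos j hj
            positivity
          · have hj' := Finset.mem_range.mp hj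
            have hsa := (add_mem_gardingCone_and_esymm_div_superadditive
              (gardingCone_anti hj'.le hγ) (gardingCone_anti hj'.le hsμ)).2
            have h2 : esymm n (j + 1) (s • μ) / esymm n j (s • μ) = s * q μ j := by
              have := hμ j hj'.le
              simp only [esymm_smul, hq]
              field_simp
              ring
            have h3 : q γ j * (1 + s * r j) = q γ j + s * q μ j := by
              have := (hqpos hγ j hj).ne'
              simp only [hr]
              field_simp
            rw [h2] at hsa
            rw [h3]
            exact hsa
      _ = esymm n (k + 1) (γ + s • μ) := prod_esymm_div hsum
  simp only [slope, vsub_eq_sub, sub_zero, zero_smul, add_zero, h1, smul_eq_mul]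
  rw [inv_mul_eq_div, le_div_iff₀ hs]
  linarith

theorem add_const_mem_gardingCone {n k : ℕ} (hkn : k ≤ n) {x : Fin n → ℝ}
    (hx : ∀ j ≤ k, 0 ≤ esymm n j x) {ε : ℝ} (hε : 0 < ε) :
    (fun i => x i + ε) ∈ gardingCone n k := by
  intro j hj
  rw [esymm_add_const n j (hj.trans hkn), Finset.sum_range_succ']
  refine add_pos_of_nonneg_of_pos (Finset.sum_nonneg fun i hi => ?_) ?_
  · have := hx (i + 1) (by rw [Finset.mem_range] at hi; omega)
    positivity
  · rw [esymm_zero, mul_one, Nat.sub_zero, Nat.sub_zero]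
    have : 0 < n.choose (n - j) := Nat.choose_pos (Nat.sub_le n j)
    positivity

theorem esymm_succ_le_of_mem_gardingCone {n k : ℕ} {x : Fin n → ℝ} (hx : x ∈ gardingCone n k) :
    ((k : ℝ) + 1) * esymm n (k + 1) x ≤ (∑ i, x i) * esymm n k x := by
  rw [← sum_mul_esymm_update, Finset.sum_mul]
  refine Finset.sum_le_sum fun i _ => ?_
  cases k with
  | zero => simp [esymm_zero]
  | succ k =>
    have h := update_mem_gardingCone hx i k le_rfl
    rw [esymm_succ n k x i]
    nlinarith [mul_nonneg (sq_nonneg (x i)) h.le]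

open Filter Topology in
theorem tendsto_esymm_add_const (n k : ℕ) (x : Fin n → ℝ) :
    Tendsto (fun ε : ℝ => esymm n k (fun i => x i + ε)) (𝓝[>] 0) (𝓝 (esymm n k x)) := by
  have h : Continuous fun ε : ℝ => esymm n k (fun i => x i + ε) :=
    (continuous_esymm n k).comp (by fun_prop)
  simpa using (h.tendsto 0).mono_left nhdsWithin_le_nhds

open Filter Topology in
theorem mem_gardingCone_of_nonneg_of_pos {n k : ℕ} (hkn : k ≤ n) {x : Fin n → ℝ}
    (hx : ∀ j ≤ k, 0 ≤ esymm n j x) (hk : 0 < esymm n k x) : x ∈ gardingCone n k := by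
  induction k with
  | zero => exact mem_gardingCone_zero _ _
  | succ k ih =>
    have hx' : ∀ j ≤ k, 0 ≤ esymm n j x := fun j hj => hx j (by omega)
    refine mem_gardingCone_succ.mpr ⟨ih (by omega) hx' ?_, hk⟩
    have hlim : ((k : ℝ) + 1) * esymm n (k + 1) x ≤ esymm n 1 x * esymm n k x := by
      refine le_of_tendsto_of_tendsto ((tendsto_esymm_add_const n (k + 1) x).const_mul _)
        ((tendsto_esymm_add_const n 1 x).mul (tendsto_esymm_add_const n k x)) ?_
      filter_upwards [self_mem_nhdsWithin] with ε hε
      have := esymm_succ_le_of_mem_gardingCone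
        (add_const_mem_gardingCone (by omega : k ≤ n) hx' hε)
      rwa [← esymm_one] at this
    refine (hx' k le_rfl).lt_of_ne fun h0 => ?_
    rw [← h0, mul_zero] at hlim
    have : 0 < ((k : ℝ) + 1) * esymm n (k + 1) x := by positivity
    linarith

open Filter Topology in
theorem garding_inequality_of_nonneg {n k : ℕ} (hkn : k + 1 ≤ n) {γ μ : Fin n → ℝ}
    (hγ : γ ∈ gardingCone n (k + 1)) (hμ : ∀ j ≤ k + 1, 0 ≤ esymm n j μ)
    (h1 : esymm n (k + 1) γ = 1) :
    ((k : ℝ) + 1) * esymm n (k + 1) μ ^ (1 / ((k : ℝ) + 1)) ≤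
      ∑ i, μ i * esymm n k (Function.update γ i 0) := by
  have h2 : Continuous fun ε : ℝ => ∑ i, (μ i + ε) * esymm n k (Function.update γ i 0) := by
    fun_prop
  have h3 := (h2.tendsto 0).mono_left (nhdsWithin_le_nhds (s := Set.Ioi 0))
  simp only [add_zero] at h3
  refine le_of_tendsto_of_tendsto (((tendsto_esymm_add_const n (k + 1) μ).rpow_const
    (Or.inr (by positivity))).const_mul _) h3 ?_
  filter_upwards [self_mem_nhdsWithin] with ε hε
  exact garding_inequality hγ (add_const_mem_gardingCone hkn hμ hε) h1

theorem exists_smul_mem_gardingCone {n k : ℕ} {ν : Fin n → ℝ} (hν : ν ∈ gardingCone n (k + 1)) :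
    ∃ c : ℝ, 0 < c ∧ c • ν ∈ gardingCone n (k + 1) ∧ esymm n (k + 1) (c • ν) = 1 ∧
      ∑ i, ν i * esymm n k (Function.update (c • ν) i 0) =
        ((k : ℝ) + 1) * esymm n (k + 1) ν ^ (1 / ((k : ℝ) + 1)) := by
  have hpos := hν (k + 1) le_rfl
  set a := esymm n (k + 1) ν ^ (1 / ((k : ℝ) + 1)) with ha
  have hapos : 0 < a := Real.rpow_pos_of_pos hpos _
  have hak : a ^ (k + 1) = esymm n (k + 1) ν := by
    rw [ha, ← Real.rpow_natCast, ← Real.rpow_mul hpos.le]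
    push_cast
    rw [one_div_mul_cancel (by positivity), Real.rpow_one]
  have h1 : esymm n (k + 1) (a⁻¹ • ν) = 1 := by
    rw [esymm_smul, ← hak, ← mul_pow, inv_mul_cancel₀ hapos.ne', one_pow]
  refine ⟨a⁻¹, inv_pos.mpr hapos, smul_mem_gardingCone hν (inv_pos.mpr hapos), h1, ?_⟩
  have h2 := sum_mul_esymm_update n k (a⁻¹ • ν)
  rw [h1, mul_one] at h2
  rw [← h2, mul_comm, Finset.mul_sum]
  refine Finset.sum_congr rfl fun i _ => ?_
  rw [Pi.smul_apply, smul_eq_mul, ← mul_assoc, mul_inv_cancel_left₀ hapos.ne']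

theorem esymm_add_const_le {n k : ℕ} (hkn : k + 1 ≤ n) {ν : Fin n → ℝ}
    (hν : ∀ j ≤ k + 1, 0 ≤ esymm n j ν) (h0 : esymm n (k + 1) ν = 0) {ε : ℝ} (hε : 0 < ε) :
    esymm n (k + 1) (fun i => ν i + ε) ≤ 2 ^ n * ε * esymm n k (fun i => ν i + ε) := by
  rw [esymm_add_const n _ hkn, esymm_add_const n _ (by omega), Finset.sum_range_succ, h0,
    mul_zero, add_zero, Finset.mul_sum]
  refine Finset.sum_le_sum fun i hi => ?_
  rw [Finset.mem_range] at hi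
  have hi0 := hν i (by omega)
  have h1 : ((n - i).choose (n - (k + 1)) : ℝ) ≤ 2 ^ n * (n - i).choose (n - k) := by
    have h2 : (n - i).choose (n - (k + 1)) ≤ 2 ^ n :=
      (Nat.choose_le_two_pow _ _).trans (Nat.pow_le_pow_right (by norm_num) (by omega))
    have h3 : 0 < (n - i).choose (n - k) := Nat.choose_pos (by omega)
    exact_mod_cast h2.trans (Nat.le_mul_of_pos_right _ h3)
  rw [show k + 1 - i = k - i + 1 by omega, pow_succ]
  calc _ = ((n - i).choose (n - (k + 1)) : ℝ) * (ε ^ (k - i) * ε * esymm n i ν) := by ring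
    _ ≤ (2 ^ n * (n - i).choose (n - k)) * (ε ^ (k - i) * ε * esymm n i ν) := by gcongr
    _ = _ := by ring

theorem le_esymm_add_const {n m : ℕ} (hmn : m + 1 ≤ n) {ν : Fin n → ℝ}
    (hν : ∀ j ≤ m + 1, 0 ≤ esymm n j ν) {ε : ℝ} (hε : 0 < ε) :
    ε ^ m * esymm n 1 ν ≤ esymm n (m + 1) (fun i => ν i + ε) := by
  rw [esymm_add_const n _ hmn]
  refine le_trans ?_ (Finset.single_le_sum
    (f := fun i => ((n - i).choose (n - (m + 1)) : ℝ) * ε ^ (m + 1 - i) * esymm n i ν)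
    (fun i hi => ?_) (Finset.mem_range.mpr (by omega : 1 < m + 1 + 1)))
  · have h1 : (1 : ℝ) ≤ (n - 1).choose (n - (m + 1)) := by
      exact_mod_cast Nat.choose_pos (by omega)
    have h2 := hν 1 (by omega)
    simp only [Nat.add_sub_cancel]
    rw [mul_assoc]
    exact le_mul_of_one_le_left (by positivity) h1
  · have := hν i (by rw [Finset.mem_range] at hi; omega)
    positivity

open Filter Topology in
/-- Near a nonzero boundary point of the Gårding cone, the rescaled vectors have unbounded
`esymm n (k - 1)`. -/
theorem exists_mem_gardingCone_le_esymm {n m : ℕ} (hmn : m + 2 ≤ n) {ν : Fin n → ℝ}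
    (hν : ∀ j ≤ m + 2, 0 ≤ esymm n j ν) (h0 : esymm n (m + 2) ν = 0) (h1 : 0 < esymm n 1 ν)
    (M : ℝ) :
    ∃ γ ∈ gardingCone n (m + 2), esymm n (m + 2) γ = 1 ∧ M ≤ esymm n (m + 1) γ ∧
      ∑ i, ν i * esymm n (m + 1) (Function.update γ i 0) ≤ (m : ℝ) + 2 := by
  wlog hM : 0 < M generalizing M
  · obtain ⟨γ, hγ, h2, h3, h4⟩ := this 1 one_pos
    exact ⟨γ, hγ, h2, by linarith, h4⟩
  have hev : ∀ᶠ ε : ℝ in 𝓝[>] 0, esymm n (m + 2) (fun i => ν i + ε) < 1 :=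
    (tendsto_esymm_add_const n (m + 2) ν).eventually_lt_const (by rw [h0]; exact one_pos)
  have hsm : ∀ᶠ ε : ℝ in 𝓝[>] 0, (2 ^ n) ^ (m + 1) * M ^ (m + 2) * ε < esymm n 1 ν := by
    have hc : Continuous fun ε : ℝ => (2 ^ n) ^ (m + 1) * M ^ (m + 2) * ε := by fun_prop
    have := (hc.tendsto 0).mono_left (nhdsWithin_le_nhds (s := Set.Ioi 0))
    exact this.eventually_lt_const (by simpa using h1)
  obtain ⟨ε, ⟨hε1, hε2⟩, hε⟩ := ((hev.and hsm).and self_mem_nhdsWithin).exists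
  have hε : 0 < ε := hε
  have hmem := add_const_mem_gardingCone hmn hν hε
  obtain ⟨c, hc, hγ, hγ1, hsum⟩ := exists_smul_mem_gardingCone hmem
  set w : Fin n → ℝ := fun i => ν i + ε with hw
  refine ⟨c • w, hγ, hγ1, ?_, ?_⟩
  · have hA := hmem (m + 1) (by omega)
    have hB := hmem (m + 2) le_rfl
    have hBA := esymm_add_const_le hmn hν h0 hε
    have hAε := le_esymm_add_const (by omega : m + 1 ≤ n) (fun j hj => hν j (by omega)) hε
    rw [← hw] at hBA hAε
    rw [esymm_smul] at hγ1 ⊢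
    set A := esymm n (m + 1) w
    set B := esymm n (m + 2) w
    by_contra! hlt
    have hkey : (c ^ (m + 1) * A) ^ (m + 2) < M ^ (m + 2) :=
      pow_lt_pow_left₀ hlt (by positivity) (by omega)
    have hcA : 1 ≤ c ^ (m + 2) * (2 ^ n * ε * A) := by
      rw [← hγ1]
      gcongr
    have hcA' : 1 ≤ (c ^ (m + 2) * (2 ^ n * ε * A)) ^ (m + 1) := one_le_pow₀ hcA
    have e1 : (c ^ (m + 2) * (2 ^ n * ε * A)) ^ (m + 1) * (ε ^ m * esymm n 1 ν) ≤
        (c ^ (m + 2) * (2 ^ n * ε * A)) ^ (m + 1) * A := by gcongr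
    have e2 : (c ^ (m + 2) * (2 ^ n * ε * A)) ^ (m + 1) * A =
        (2 ^ n) ^ (m + 1) * ε ^ (m + 1) * (c ^ (m + 1) * A) ^ (m + 2) := by ring
    have e3 : ε ^ m * esymm n 1 ν ≤
        (c ^ (m + 2) * (2 ^ n * ε * A)) ^ (m + 1) * (ε ^ m * esymm n 1 ν) :=
      le_mul_of_one_le_left (by positivity) hcA'
    have e4 : (2 ^ n) ^ (m + 1) * ε ^ (m + 1) * (c ^ (m + 1) * A) ^ (m + 2) ≤
        (2 ^ n) ^ (m + 1) * ε ^ (m + 1) * M ^ (m + 2) := by gcongr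
    have e5 : ε ^ m * ((2 ^ n) ^ (m + 1) * M ^ (m + 2) * ε) < ε ^ m * esymm n 1 ν := by gcongr
    have e6 : ε ^ m * ((2 ^ n) ^ (m + 1) * M ^ (m + 2) * ε) =
        (2 ^ n) ^ (m + 1) * ε ^ (m + 1) * M ^ (m + 2) := by ring
    linarith
  · have hle : ∑ i, ν i * esymm n (m + 1) (Function.update (c • w) i 0) ≤
        ∑ i, w i * esymm n (m + 1) (Function.update (c • w) i 0) := by
      refine Finset.sum_le_sum fun i _ => ?_
      have := update_mem_gardingCone hγ i (m + 1) le_rfl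
      have : ν i ≤ w i := by simp only [hw]; linarith
      gcongr
    rw [hsum] at hle
    have hp : esymm n (m + 1 + 1) w ^ (1 / (((m + 1 : ℕ) : ℝ) + 1)) ≤ 1 :=
      Real.rpow_le_one (hmem _ le_rfl).le hε1.le (by positivity)
    have : (((m + 1 : ℕ) : ℝ) + 1) * esymm n (m + 1 + 1) w ^ (1 / (((m + 1 : ℕ) : ℝ) + 1)) ≤
        ((m + 1 : ℕ) : ℝ) + 1 := mul_le_of_le_one_right (by positivity) hp
    push_cast at this hle
    linarith

theorem eq_zero_of_sum_eq_zero_of_esymm_two_nonneg {n : ℕ} {x : Fin n → ℝ}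
    (h1 : esymm n 1 x = 0) (h2 : 0 ≤ esymm n 2 x) : x = 0 := by
  have h := sum_mul_esymm_update n 1 x
  have h3 : ∀ i, x i * esymm n 1 (Function.update x i 0) = -(x i ^ 2) := fun i => by
    have := esymm_succ n 0 x i
    rw [zero_add, h1, esymm_zero] at this
    rw [show esymm n 1 (Function.update x i 0) = -x i by linarith]
    ring
  simp_rw [h3, Finset.sum_neg_distrib] at h
  push_cast at h
  have h4 : ∑ i, x i ^ 2 = 0 :=
    le_antisymm (by linarith) (Finset.sum_nonneg fun i _ => sq_nonneg _)
  rw [Finset.sum_eq_zero_iff_of_nonneg fun i _ => sq_nonneg _] at h4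
  funext i
  simpa using h4 i (Finset.mem_univ i)

open Filter Topology in
/-- A vector outside the closed cone is a boundary point minus a positive multiple of `1`. -/
theorem exists_add_const_boundary {n k : ℕ} (hkn : k ≤ n) {μ : Fin n → ℝ}
    (hμ : ¬ ∀ j ≤ k, 0 ≤ esymm n j μ) :
    ∃ t > 0, (∀ j ≤ k, 0 ≤ esymm n j (fun i => μ i + t)) ∧
      esymm n k (fun i => μ i + t) = 0 := by
  have hcont : ∀ j, Continuous fun t : ℝ => esymm n j (fun i => μ i + t) := fun j =>
    (continuous_esymm n j).comp (by fun_prop)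
  set S : Set ℝ := {t | 0 ≤ t ∧ ∀ j ≤ k, 0 ≤ esymm n j (fun i => μ i + t)} with hS
  have hclosed : IsClosed S := by
    simp only [hS, Set.ofPred_and, Set.ofPred_forall]
    exact isClosed_Ici.inter (isClosed_iInter fun j => isClosed_iInter fun _ =>
      isClosed_le continuous_const (hcont j))
  have hne : S.Nonempty := by
    refine ⟨∑ i, |μ i|, Finset.sum_nonneg fun i _ => abs_nonneg _, fun j _ => ?_⟩
    refine Finset.sum_nonneg fun s _ => Finset.prod_nonneg fun i _ => ?_
    have := Finset.single_le_sum (fun i _ => abs_nonneg (μ i)) (Finset.mem_univ i)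
    linarith [neg_abs_le (μ i)]
  have hbdd : BddBelow S := ⟨0, fun t ht => ht.1⟩
  obtain ⟨ht0, ht⟩ := hclosed.csInf_mem hne hbdd
  have hpos : 0 < sInf S := by
    refine ht0.lt_of_ne fun h => hμ ?_
    rw [← h] at ht
    simpa using ht
  refine ⟨sInf S, hpos, ht, ?_⟩
  by_contra hk
  have hmem := mem_gardingCone_of_nonneg_of_pos hkn ht ((ht k le_rfl).lt_of_ne' hk)
  have hev : ∀ᶠ t in 𝓝[<] (sInf S), ∀ j ∈ Finset.range (k + 1),
      0 < esymm n j (fun i => μ i + t) := by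
    rw [Filter.eventually_all_finset]
    intro j hj
    exact (((hcont j).tendsto _).mono_left nhdsWithin_le_nhds).eventually_const_lt
      (hmem j (by rw [Finset.mem_range] at hj; omega))
  have hev0 : ∀ᶠ t in 𝓝[<] (sInf S), 0 < t :=
    nhdsWithin_le_nhds (Ioi_mem_nhds hpos)
  obtain ⟨t, ⟨h1, h2⟩, h3⟩ := ((hev.and hev0).and self_mem_nhdsWithin).exists
  have h3 : t < sInf S := h3
  exact absurd (csInf_le hbdd ⟨h2.le, fun j hj =>
    (h1 j (Finset.mem_range.mpr (by omega))).le⟩) (not_le.mpr h3)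

theorem exists_esymm_boundary_direction {n m : ℕ} (hmn : m + 2 ≤ n) :
    ∃ ν : Fin n → ℝ, (∀ j ≤ m + 2, 0 ≤ esymm n j ν) ∧ esymm n (m + 2) ν = 0 ∧
      0 < esymm n 1 ν := by
  refine ⟨Pi.single ⟨0, by omega⟩ 1, fun j _ => ?_, ?_, ?_⟩
  · exact Finset.sum_nonneg fun s _ => Finset.prod_nonneg fun i _ => by
      rw [Pi.single_apply]
      positivity
  · refine Finset.sum_eq_zero fun s hs => ?_
    have hc : 1 < s.card := by rw [(Finset.mem_powersetCard.mp hs).2]; omega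
    obtain ⟨i, hi, hne⟩ := Finset.exists_mem_ne hc (⟨0, by omega⟩ : Fin n)
    exact Finset.prod_eq_zero hi (Pi.single_eq_of_ne hne _)
  · rw [esymm_one, Finset.sum_pi_single']
    simp

theorem exists_mem_gardingCone_sum_le {n m : ℕ} (hmn : m + 2 ≤ n) {μ : Fin n → ℝ}
    (hμ : ¬ ∀ j ≤ m + 2, 0 ≤ esymm n j μ) (M : ℝ) :
    ∃ γ ∈ gardingCone n (m + 2), esymm n (m + 2) γ = 1 ∧
      ∑ i, μ i * esymm n (m + 1) (Function.update γ i 0) ≤ M := by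
  obtain ⟨t, ht, hν, h0⟩ := exists_add_const_boundary hmn hμ
  set ν : Fin n → ℝ := fun i => μ i + t with hνdef
  have hsum : ∀ γ : Fin n → ℝ, ∑ i, μ i * esymm n (m + 1) (Function.update γ i 0) =
      ∑ i, ν i * esymm n (m + 1) (Function.update γ i 0) -
        t * ((n - (m + 1 : ℕ) : ℝ) * esymm n (m + 1) γ) := fun γ => by
    rw [← sum_esymm_update, Finset.mul_sum, ← Finset.sum_sub_distrib]
    refine Finset.sum_congr rfl fun i _ => ?_
    simp only [hνdef]
    ring
  have hnm : (1 : ℝ) ≤ n - (m + 1 : ℕ) := by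
    have : ((m + 2 : ℕ) : ℝ) ≤ n := by exact_mod_cast hmn
    push_cast at this ⊢
    linarith
  obtain ⟨γ, hγ, hγ1, hE, hle⟩ : ∃ γ ∈ gardingCone n (m + 2), esymm n (m + 2) γ = 1 ∧
      (m + 2 - M) / t ≤ esymm n (m + 1) γ ∧
      ∑ i, ν i * esymm n (m + 1) (Function.update γ i 0) ≤ (m : ℝ) + 2 := by
    by_cases h1 : 0 < esymm n 1 ν
    · exact exists_mem_gardingCone_le_esymm hmn hν h0 h1 _
    · have hz : ν = 0 := eq_zero_of_sum_eq_zero_of_esymm_two_nonneg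
        (le_antisymm (not_lt.mp h1) (hν 1 (by omega))) (hν 2 (by omega))
      obtain ⟨ξ, hξ, hξ0, hξ1⟩ := exists_esymm_boundary_direction hmn
      obtain ⟨γ, hγ, hγ1, hE, -⟩ :=
        exists_mem_gardingCone_le_esymm hmn hξ hξ0 hξ1 ((m + 2 - M) / t)
      refine ⟨γ, hγ, hγ1, hE, ?_⟩
      rw [hz]
      simp only [Pi.zero_apply, zero_mul, Finset.sum_const_zero]
      positivity
  refine ⟨γ, hγ, hγ1, ?_⟩
  rw [hsum]
  have hEpos := hγ (m + 1) (by omega)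
  rw [div_le_iff₀ ht] at hE
  nlinarith [mul_le_mul_of_nonneg_right hnm (mul_pos ht hEpos).le]

theorem stmt_13 (n k : ℕ) (hk2 : 2 ≤ k) (hkn : k ≤ n) (μ : Fin n → ℝ) :
    ((∀ j, 1 ≤ j → j ≤ k → 0 ≤ esymm n j μ) →
      (⨅ γ ∈ {γ : Fin n → ℝ |
          (∀ j, 1 ≤ j → j ≤ k → 0 < esymm n j γ) ∧ esymm n k γ = 1},
          ((∑ i, μ i * esymm n (k - 1) (Function.update γ i 0) : ℝ) : EReal))
        = (((k : ℝ) * esymm n k μ ^ (1 / (k : ℝ)) : ℝ) : EReal)) ∧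
    (¬ (∀ j, 1 ≤ j → j ≤ k → 0 ≤ esymm n j μ) →
      (⨅ γ ∈ {γ : Fin n → ℝ |
          (∀ j, 1 ≤ j → j ≤ k → 0 < esymm n j γ) ∧ esymm n k γ = 1},
          ((∑ i, μ i * esymm n (k - 1) (Function.update γ i 0) : ℝ) : EReal)) = ⊥) := by
  obtain ⟨m, rfl⟩ := Nat.exists_eq_add_of_le' hk2
  have hiff : (∀ j, 1 ≤ j → j ≤ m + 2 → 0 ≤ esymm n j μ) ↔ ∀ j ≤ m + 2, 0 ≤ esymm n j μ := by
    refine ⟨fun h j hj => ?_, fun h j _ hj => h j hj⟩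
    rcases Nat.eq_zero_or_pos j with rfl | hj0
    · rw [esymm_zero]; exact zero_le_one
    · exact h j hj0 hj
  simp only [hiff, ← mem_gardingCone_iff, show m + 2 - 1 = m + 1 from rfl]
  refine ⟨fun hμ => le_antisymm ?_ ?_, fun hμ => ?_⟩
  · have hlim : Filter.Tendsto
        (fun ε : ℝ => ((((m + 2 : ℕ) : ℝ) * esymm n (m + 2) (fun i => μ i + ε) ^
          (1 / ((m + 2 : ℕ) : ℝ)) : ℝ) : EReal)) (nhdsWithin 0 (Set.Ioi 0))
        (nhds ((((m + 2 : ℕ) : ℝ) * esymm n (m + 2) μ ^ (1 / ((m + 2 : ℕ) : ℝ)) : ℝ) : EReal)) :=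
      (continuous_coe_real_ereal.tendsto _).comp
        (((tendsto_esymm_add_const n (m + 2) μ).rpow_const
          (Or.inr (by positivity))).const_mul _)
    refine ge_of_tendsto hlim ?_
    filter_upwards [self_mem_nhdsWithin] with ε hε
    have hε : 0 < ε := hε
    obtain ⟨c, -, hγ, hγ1, hsum⟩ :=
      exists_smul_mem_gardingCone (add_const_mem_gardingCone hkn hμ hε)
    refine (iInf₂_le (c • fun i => μ i + ε) ⟨hγ, hγ1⟩).trans (EReal.coe_le_coe_iff.mpr ?_)
    have hcast : (((m + 1 : ℕ) : ℝ) + 1) = ((m + 2 : ℕ) : ℝ) := by push_cast; ring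
    rw [hcast] at hsum
    rw [← hsum]
    refine Finset.sum_le_sum fun i _ => mul_le_mul_of_nonneg_right (by linarith) ?_
    exact (update_mem_gardingCone hγ i (m + 1) le_rfl).le
  · refine le_iInf₂ fun γ hγ => EReal.coe_le_coe_iff.mpr ?_
    have := garding_inequality_of_nonneg hkn hγ.1 hμ hγ.2
    rwa [show (((m + 1 : ℕ) : ℝ) + 1) = ((m + 2 : ℕ) : ℝ) by push_cast; ring] at this
  · refine EReal.eq_bot_iff_forall_lt _ |>.mpr fun M => ?_
    obtain ⟨γ, hγ, hγ1, hle⟩ := exists_mem_gardingCone_sum_le hkn hμ (M - 1)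
    refine (iInf₂_le γ ⟨hγ, hγ1⟩).trans_lt (EReal.coe_lt_coe_iff.mpr ?_)
    linarith
end

section
/- Fix 2 ≤ k ≤ n and let 𝒜_k = {A ∈ S₊ⁿ(ℝ) : λᵢ(A)² = σ_{k−1,i}(γ) for some γ ∈ Γ_k with σ_k(γ) = 1}. Then for every symmetric n×n matrix M: inf_{A ∈ 𝒜_k} trace(AᵀMA) = k·σ_k(λ(M))^{1/k} if λ(M) ∈ closure(Γ_k), and −∞ otherwise. -/
open Matrix

/-- Elementary symmetric polynomial of the variables indexed by a finset. -/
def finsetEsymm {ι : Type*} (S : Finset ι) (k : ℕ) (x : ι → ℝ) : ℝ :=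
  ∑ s ∈ S.powersetCard k, ∏ i ∈ s, x i

section ElementarySymmetric

variable {ι : Type*}

theorem finsetEsymm_zero (S : Finset ι) (x : ι → ℝ) : finsetEsymm S 0 x = 1 := by
  simp [finsetEsymm]

theorem finsetEsymm_eq_zero (S : Finset ι) {k : ℕ} (h : S.card < k) (x : ι → ℝ) :
    finsetEsymm S k x = 0 := by
  simp [finsetEsymm, Finset.powersetCard_eq_empty.2 h]

theorem finsetEsymm_one (S : Finset ι) (x : ι → ℝ) : finsetEsymm S 1 x = ∑ i ∈ S, x i := by
  simp [finsetEsymm, Finset.powersetCard_one]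

theorem finsetEsymm_congr (S : Finset ι) (k : ℕ) {x y : ι → ℝ} (h : ∀ i ∈ S, x i = y i) :
    finsetEsymm S k x = finsetEsymm S k y := by
  refine Finset.sum_congr rfl fun s hs => Finset.prod_congr rfl fun i hi => h i ?_
  exact (Finset.mem_powersetCard.1 hs).1 hi

theorem finsetEsymm_smul (S : Finset ι) (k : ℕ) (c : ℝ) (x : ι → ℝ) :
    finsetEsymm S k (c • x) = c ^ k * finsetEsymm S k x := by
  rw [finsetEsymm, finsetEsymm, Finset.mul_sum]
  refine Finset.sum_congr rfl fun s hs => ?_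
  simp [Finset.prod_mul_distrib, (Finset.mem_powersetCard.1 hs).2]

theorem finsetEsymm_nonneg (S : Finset ι) (k : ℕ) {x : ι → ℝ} (h : ∀ i ∈ S, 0 ≤ x i) :
    0 ≤ finsetEsymm S k x :=
  Finset.sum_nonneg fun _ hs => Finset.prod_nonneg fun i hi =>
    h i ((Finset.mem_powersetCard.1 hs).1 hi)

theorem continuous_finsetEsymm (S : Finset ι) (k : ℕ) :
    Continuous (finsetEsymm S k : (ι → ℝ) → ℝ) := by
  unfold finsetEsymm
  fun_prop

variable [DecidableEq ι]

theorem finsetEsymm_insert {S : Finset ι} {i : ι} (hi : i ∉ S) (k : ℕ) (x : ι → ℝ) :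
    finsetEsymm (insert i S) (k + 1) x = finsetEsymm S (k + 1) x + x i * finsetEsymm S k x := by
  rw [finsetEsymm, Finset.powersetCard_succ_insert hi, Finset.sum_union, Finset.sum_image]
  · congr 1
    rw [finsetEsymm, Finset.mul_sum]
    refine Finset.sum_congr rfl fun s hs => ?_
    rw [Finset.prod_insert fun h => hi ((Finset.mem_powersetCard.1 hs).1 h)]
  · intro s hs t ht h
    have h1 : i ∉ s := fun h => hi ((Finset.mem_powersetCard.1 hs).1 h)
    have h2 : i ∉ t := fun h => hi ((Finset.mem_powersetCard.1 ht).1 h)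
    rw [← Finset.erase_insert h1, ← Finset.erase_insert h2, h]
  · rw [Finset.disjoint_left]
    intro s hs hs'
    obtain ⟨t, -, rfl⟩ := Finset.mem_image.1 hs'
    exact hi ((Finset.mem_powersetCard.1 hs).1 (Finset.mem_insert_self _ _))

theorem finsetEsymm_erase {S : Finset ι} {i : ι} (hi : i ∈ S) (k : ℕ) (x : ι → ℝ) :
    finsetEsymm S (k + 1) x
      = finsetEsymm (S.erase i) (k + 1) x + x i * finsetEsymm (S.erase i) k x := by
  conv_lhs => rw [← Finset.insert_erase hi]
  exact finsetEsymm_insert (Finset.notMem_erase _ _) _ _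

theorem sum_finsetEsymm_erase (S : Finset ι) (k : ℕ) (x : ι → ℝ) :
    ∑ i ∈ S, finsetEsymm (S.erase i) k x = (S.card - k) * finsetEsymm S k x := by
  simp only [finsetEsymm]
  rw [Finset.sum_comm' (t' := S.powersetCard k) (s' := fun s => S \ s), Finset.mul_sum]
  · refine Finset.sum_congr rfl fun s hs => ?_
    obtain ⟨h1, h2⟩ := Finset.mem_powersetCard.1 hs
    rw [Finset.sum_const, nsmul_eq_mul, Finset.card_sdiff_of_subset h1,
      Nat.cast_sub (Finset.card_le_card h1), h2]
  · intro i s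
    simp only [Finset.mem_powersetCard, Finset.mem_sdiff, Finset.subset_erase]
    tauto

theorem sum_mul_finsetEsymm_erase (S : Finset ι) (k : ℕ) (x : ι → ℝ) :
    ∑ i ∈ S, x i * finsetEsymm (S.erase i) k x = (k + 1) * finsetEsymm S (k + 1) x := by
  have h : ∀ i ∈ S, x i * finsetEsymm (S.erase i) k x
      = finsetEsymm S (k + 1) x - finsetEsymm (S.erase i) (k + 1) x := fun i hi => by
    rw [finsetEsymm_erase hi]; ring
  rw [Finset.sum_congr rfl h, Finset.sum_sub_distrib, sum_finsetEsymm_erase, Finset.sum_const,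
    nsmul_eq_mul]
  push_cast
  ring

theorem hasDerivAt_finsetEsymm (S : Finset ι) (k : ℕ) (x v : ι → ℝ) (t : ℝ) :
    HasDerivAt (fun t : ℝ => finsetEsymm S (k + 1) (x + t • v))
      (∑ i ∈ S, v i * finsetEsymm (S.erase i) k (x + t • v)) t := by
  induction S using Finset.induction_on generalizing k with
  | empty =>
    simp only [finsetEsymm_eq_zero ∅ (show Finset.card ∅ < k + 1 by simp), Finset.sum_empty]
    exact hasDerivAt_const _ _
  | insert a S ha ih =>
    simp only [finsetEsymm_insert ha]
    have hx : HasDerivAt (fun t : ℝ => (x + t • v) a) (v a) t := by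
      simpa using ((hasDerivAt_id t).mul_const (v a)).const_add (x a)
    have hE : ∀ i ∈ S, (insert a S).erase i = insert a (S.erase i) := fun i hi =>
      Finset.erase_insert_of_ne (fun h => ha (h ▸ hi))
    have hn : ∀ i, a ∉ S.erase i := fun i h => ha (Finset.mem_of_mem_erase h)
    rw [Finset.sum_insert ha, Finset.erase_insert ha]
    cases k with
    | zero =>
      simp only [finsetEsymm_zero, mul_one] at ih ⊢
      refine ((ih 0).add hx).congr_deriv ?_
      simp only [finsetEsymm_zero, mul_one]
      ring
    | succ k =>
      refine ((ih (k + 1)).add (hx.mul (ih k))).congr_deriv ?_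
      have h : ∀ i ∈ S, v i * finsetEsymm ((insert a S).erase i) (k + 1) (x + t • v)
          = v i * finsetEsymm (S.erase i) (k + 1) (x + t • v)
            + (x + t • v) a * (v i * finsetEsymm (S.erase i) k (x + t • v)) := fun i hi => by
        rw [hE i hi, finsetEsymm_insert (hn i)]; ring
      rw [Finset.sum_congr rfl h, Finset.sum_add_distrib, ← Finset.mul_sum]
      ring

end ElementarySymmetric

theorem splits_derivative {p : Polynomial ℝ} (hp : p.Splits) : p.derivative.Splits := by
  rw [Polynomial.splits_iff_card_roots] at hp ⊢
  have h1 := p.card_roots_le_derivative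
  have h2 := p.derivative.card_roots'
  have h3 := p.natDegree_derivative_le
  rcases Nat.eq_zero_or_pos p.natDegree with h | h
  · have : p.derivative.natDegree = 0 := by omega
    omega
  · omega

theorem laguerre_inequality {p : Polynomial ℝ} (hp : p.Splits) (x : ℝ) :
    p.eval x * p.derivative.derivative.eval x ≤ (p.derivative.eval x) ^ 2 := by
  obtain ⟨m, hm⟩ := Polynomial.splits_iff_exists_multiset.1 hp
  rw [hm]
  clear hm
  induction m using Multiset.induction_on with
  | empty => simp
  | cons a m ih =>
    simp only [Multiset.map_cons, Multiset.prod_cons]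
    set q := (m.map fun a => Polynomial.X - Polynomial.C a).prod
    simp only [Polynomial.derivative_mul, Polynomial.derivative_C, Polynomial.derivative_sub,
      Polynomial.derivative_X, Polynomial.derivative_add, Polynomial.eval_mul,
      Polynomial.eval_add, Polynomial.eval_sub, Polynomial.eval_X, Polynomial.eval_C, sub_zero,
      zero_mul, zero_add, one_mul] at ih ⊢
    nlinarith [sq_nonneg (Polynomial.leadingCoeff p * q.eval x),
      mul_nonneg (sq_nonneg (x - a)) (sub_nonneg.2 ih)]

theorem newton_inequality {ι : Type*} (S : Finset ι) (k : ℕ) (x : ι → ℝ) :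
    finsetEsymm S k x * finsetEsymm S (k + 2) x ≤ finsetEsymm S (k + 1) x ^ 2 := by
  classical
  rcases lt_or_ge S.card (k + 2) with h | h
  · rw [finsetEsymm_eq_zero S h, mul_zero]; positivity
  obtain ⟨N, hN⟩ := Nat.exists_eq_add_of_le h
  set P : Polynomial ℝ := ∏ i ∈ S, (Polynomial.X + Polynomial.C (x i)) with hP
  have hPs : P.Splits := Polynomial.Splits.prod fun i _ => Polynomial.Splits.X_add_C _
  have hQs : ∀ m, (Polynomial.derivative^[m] P).Splits := fun m => by
    induction m with
    | zero => simpa using hPs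
    | succ m ih => rw [Function.iterate_succ_apply']; exact splits_derivative ih
  have hc : ∀ m ≤ S.card, P.coeff m = finsetEsymm S (S.card - m) x := fun m hm =>
    Finset.prod_X_add_C_coeff S x hm
  have e : ∀ m ≤ k + 2, (Polynomial.derivative^[N + m] P).eval 0
      = (N + m).factorial * finsetEsymm S (k + 2 - m) x := fun m hm => by
    rw [← Polynomial.coeff_zero_eq_eval_zero, Polynomial.coeff_iterate_derivative, zero_add,
      Nat.descFactorial_self, nsmul_eq_mul, hc _ (by omega)]
    congr 2
    omega
  have hL := laguerre_inequality (hQs N) 0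
  rw [← Function.iterate_succ_apply' Polynomial.derivative,
    ← Function.iterate_succ_apply' Polynomial.derivative,
    show (Polynomial.derivative^[N] P) = Polynomial.derivative^[N + 0] P from rfl,
    e 0 (by omega), e 1 (by omega), e 2 (by omega)] at hL
  rw [show k + 2 - 1 = k + 1 by omega, show k + 2 - 2 = k by omega, Nat.sub_zero] at hL
  have f1 : ((N + 1).factorial : ℝ) = (N + 1) * N.factorial := by
    rw [Nat.factorial_succ]; push_cast; ring
  have f2 : ((N + 2).factorial : ℝ) = (N + 2) * ((N + 1) * N.factorial) := by
    rw [Nat.factorial_succ, Nat.factorial_succ]; push_cast; ring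
  rw [f1, f2, add_zero] at hL
  have hpos : (0 : ℝ) < N.factorial := by positivity
  set a := finsetEsymm S k x
  set b := finsetEsymm S (k + 1) x
  set c := finsetEsymm S (k + 2) x
  have h1 : ((N : ℝ) + 2) * (a * c) ≤ (N + 1) * b ^ 2 := by
    refine le_of_mul_le_mul_left ?_ (show (0 : ℝ) < N.factorial ^ 2 * (N + 1) by positivity)
    linarith
  have hN0 : (0 : ℝ) ≤ N := by positivity
  rcases le_total (a * c) 0 with h0 | h0
  · exact h0.trans (sq_nonneg b)
  · nlinarith

/-- The open Gårding cone of the variables indexed by `S`. -/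
def InGardingCone {ι : Type*} (S : Finset ι) (k : ℕ) (x : ι → ℝ) : Prop :=
  ∀ j ≤ k, 0 < finsetEsymm S j x

/-- The closed Gårding cone of the variables indexed by `S`. -/
def InClosedGardingCone {ι : Type*} (S : Finset ι) (k : ℕ) (x : ι → ℝ) : Prop :=
  ∀ j ≤ k, 0 ≤ finsetEsymm S j x

theorem harmonic_sum_superadditive {x y a b c : ℝ} (hx : 0 < x + a) (hy : 0 < y + b)
    (hc : a + b ≤ c) :
    x * a / (x + a) + y * b / (y + b) ≤ (x + y) * c / (x + y + c) := by
  have h : 0 < x + y + c := by linarith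
  have e : ∀ u v : ℝ, 0 < u + v → u * v / (u + v) = u - u ^ 2 / (u + v) := fun u v huv => by
    have := huv.ne'
    field_simp
    ring
  rw [e _ _ hx, e _ _ hy, e _ _ h]
  have h1 : (x + y) ^ 2 / (x + y + c) ≤ (x + y) ^ 2 / ((x + a) + (y + b)) :=
    div_le_div_of_nonneg_left (sq_nonneg _) (add_pos hx hy) (by linarith)
  have h2 : (x + y) ^ 2 / ((x + a) + (y + b)) ≤ x ^ 2 / (x + a) + y ^ 2 / (y + b) := by
    generalize x + a = p at *
    generalize y + b = q at *
    rw [div_add_div _ _ hx.ne' hy.ne', div_le_div_iff₀ (add_pos hx hy) (mul_pos hx hy)]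
    nlinarith [sq_nonneg (x * q - y * p)]
  linarith

section GardingCone

variable {ι : Type*}

theorem InGardingCone.mono {S : Finset ι} {k l : ℕ} (h : l ≤ k) {x : ι → ℝ}
    (hx : InGardingCone S k x) : InGardingCone S l x :=
  fun j hj => hx j (hj.trans h)

theorem InClosedGardingCone.mono {S : Finset ι} {k l : ℕ} (h : l ≤ k) {x : ι → ℝ}
    (hx : InClosedGardingCone S k x) : InClosedGardingCone S l x :=
  fun j hj => hx j (hj.trans h)

theorem isOpen_inGardingCone (S : Finset ι) (k : ℕ) : IsOpen {x | InGardingCone S k x} := by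
  have : {x | InGardingCone S k x} = ⋂ j ∈ Set.Iic k, {x | 0 < finsetEsymm S j x} := by
    ext x; simp [InGardingCone]
  rw [this]
  exact (Set.finite_Iic k).isOpen_biInter fun j _ =>
    isOpen_lt continuous_const (continuous_finsetEsymm S j)

theorem isClosed_inClosedGardingCone (S : Finset ι) (k : ℕ) :
    IsClosed {x | InClosedGardingCone S k x} := by
  have : {x | InClosedGardingCone S k x} = ⋂ j ∈ Set.Iic k, {x | 0 ≤ finsetEsymm S j x} := by
    ext x; simp [InClosedGardingCone]
  rw [this]
  exact isClosed_biInter fun j _ => isClosed_le continuous_const (continuous_finsetEsymm S j)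

theorem tendsto_shift (x : ι → ℝ) :
    Filter.Tendsto (fun t : ℝ => x + t • (1 : ι → ℝ)) (nhdsWithin 0 (Set.Ioi 0)) (nhds x) := by
  have : Continuous fun t : ℝ => x + t • (1 : ι → ℝ) := by fun_prop
  simpa using (this.tendsto 0).mono_left nhdsWithin_le_nhds

theorem InGardingCone.smul {S : Finset ι} {k : ℕ} {x : ι → ℝ} (hx : InGardingCone S k x) {c : ℝ}
    (hc : 0 < c) : InGardingCone S k (c • x) := fun j hj => by
  rw [finsetEsymm_smul]
  exact mul_pos (pow_pos hc j) (hx j hj)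

theorem InGardingCone.prod_ratio {S : Finset ι} {k : ℕ} {x : ι → ℝ} (hx : InGardingCone S k x) :
    ∏ j ∈ Finset.range k, (finsetEsymm S (j + 1) x / finsetEsymm S j x) = finsetEsymm S k x := by
  induction k with
  | zero => simp [finsetEsymm_zero]
  | succ k ih =>
    rw [Finset.prod_range_succ, ih (hx.mono (Nat.le_succ k)),
      mul_div_cancel₀ _ (hx k (Nat.le_succ k)).ne']

variable [DecidableEq ι]

theorem InGardingCone.erase {S : Finset ι} {k : ℕ} {x : ι → ℝ} (hx : InGardingCone S (k + 1) x)
    {i : ι} (hi : i ∈ S) : InGardingCone (S.erase i) k x := by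
  intro j
  induction j with
  | zero => intro _; simp [finsetEsymm_zero]
  | succ j ih =>
    intro hj
    have h0 := ih (by omega)
    have h1 := hx (j + 1) (by omega)
    have h2 := hx (j + 2) (by omega)
    have hN := newton_inequality (S.erase i) j x
    rw [finsetEsymm_erase hi] at h1 h2
    by_contra! h
    set a := finsetEsymm (S.erase i) j x
    set b := finsetEsymm (S.erase i) (j + 1) x
    set c := finsetEsymm (S.erase i) (j + 2) x
    change 0 < c + x i * b at h2
    nlinarith [mul_pos h0 h2, mul_nonneg (neg_nonneg.2 h) h1.le]

theorem inGardingCone_shift {S : Finset ι} {k : ℕ} (hk : k ≤ S.card) {x : ι → ℝ}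
    (hx : InClosedGardingCone S k x) {t : ℝ} (ht : 0 < t) :
    InGardingCone S k (x + t • (1 : ι → ℝ)) := by
  intro j
  induction j generalizing t with
  | zero => simp [finsetEsymm_zero]
  | succ j ih =>
    intro hj
    have hd := hasDerivAt_finsetEsymm S j x 1
    have hm : StrictMonoOn (fun t : ℝ => finsetEsymm S (j + 1) (x + t • 1)) (Set.Ici 0) := by
      refine strictMonoOn_of_deriv_pos (convex_Ici 0)
        (fun t _ => (hd t).continuousAt.continuousWithinAt) fun s hs => ?_
      rw [interior_Ici] at hs
      rw [(hd s).deriv]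
      simp only [Pi.one_apply, one_mul]
      rw [sum_finsetEsymm_erase]
      refine mul_pos (sub_pos.2 ?_) (ih hs (by omega))
      exact_mod_cast (show j < S.card by omega)
    have h := hm (Set.mem_Ici.2 le_rfl) (Set.mem_Ici.2 ht.le) ht
    have h0 := hx (j + 1) hj
    simp only [zero_smul, add_zero] at h
    exact h0.trans_lt h

theorem InClosedGardingCone.erase {S : Finset ι} {k : ℕ} (hk : k + 1 ≤ S.card) {x : ι → ℝ}
    (hx : InClosedGardingCone S (k + 1) x) {i : ι} (hi : i ∈ S) :
    InClosedGardingCone (S.erase i) k x := by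
  refine (isClosed_inClosedGardingCone _ _).mem_of_tendsto (tendsto_shift x) ?_
  filter_upwards [self_mem_nhdsWithin] with t ht j hj
  exact ((inGardingCone_shift hk hx ht).erase hi j hj).le

theorem finsetEsymm_pos_of_pos_coords {S : Finset ι} {k : ℕ} (hk : k + 1 ≤ S.card) {x : ι → ℝ}
    (hx : InClosedGardingCone S (k + 1) x) {T : Finset ι} (hTS : T ⊆ S) (hTk : k ≤ T.card)
    (hT : ∀ i ∈ T, 0 < x i) : 0 < finsetEsymm S k x := by
  induction k generalizing S T with
  | zero => simp [finsetEsymm_zero]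
  | succ k ih =>
    obtain ⟨i, hi⟩ := Finset.card_pos.1 (show 0 < T.card by omega)
    have hx' := hx.erase hk (hTS hi)
    rw [finsetEsymm_erase (hTS hi)]
    refine add_pos_of_nonneg_of_pos (hx' _ le_rfl) (mul_pos (hT i hi) ?_)
    refine ih (T := T.erase i) ?_ hx' (Finset.erase_subset_erase _ hTS) ?_ ?_
    · rw [Finset.card_erase_of_mem (hTS hi)]; omega
    · rw [Finset.card_erase_of_mem hi]; omega
    · exact fun j hj => hT j (Finset.mem_of_mem_erase hj)

theorem InGardingCone.add_and_ratio {S : Finset ι} {k : ℕ} {x y : ι → ℝ}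
    (hx : InGardingCone S (k + 1) x) (hy : InGardingCone S (k + 1) y) :
    InGardingCone S (k + 1) (x + y) ∧
      finsetEsymm S (k + 1) x / finsetEsymm S k x + finsetEsymm S (k + 1) y / finsetEsymm S k y
        ≤ finsetEsymm S (k + 1) (x + y) / finsetEsymm S k (x + y) := by
  induction k generalizing S with
  | zero =>
    refine ⟨fun j hj => ?_, ?_⟩
    · have hx1 := hx 1 le_rfl
      have hy1 := hy 1 le_rfl
      interval_cases j
      · simp [finsetEsymm_zero]
      · simp only [finsetEsymm_one, Pi.add_apply, Finset.sum_add_distrib] at *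
        linarith
    · simp [finsetEsymm_zero, finsetEsymm_one, Finset.sum_add_distrib]
  | succ k ih =>
    have hxk := hx.mono (Nat.le_succ (k + 1))
    have hyk := hy.mono (Nat.le_succ (k + 1))
    obtain ⟨hxy, -⟩ := ih hxk hyk
    have key : ∀ z, InGardingCone S (k + 1) z → finsetEsymm S (k + 2) z / finsetEsymm S (k + 1) z
        = (∑ i ∈ S, z i * (finsetEsymm (S.erase i) (k + 1) z / finsetEsymm (S.erase i) k z) /
          (z i + finsetEsymm (S.erase i) (k + 1) z / finsetEsymm (S.erase i) k z)) / (k + 2) ∧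
        ∀ i ∈ S, 0 < z i + finsetEsymm (S.erase i) (k + 1) z / finsetEsymm (S.erase i) k z := by
      intro z hz
      have hpos : ∀ i ∈ S, z i + finsetEsymm (S.erase i) (k + 1) z / finsetEsymm (S.erase i) k z
          = finsetEsymm S (k + 1) z / finsetEsymm (S.erase i) k z := by
        intro i hi
        have := (hz.erase hi k le_rfl).ne'
        rw [finsetEsymm_erase hi]
        field_simp
        ring
      have hz1 := hz (k + 1) le_rfl
      refine ⟨?_, fun i hi => ?_⟩
      · have : ∀ i ∈ S, z i * (finsetEsymm (S.erase i) (k + 1) z / finsetEsymm (S.erase i) k z) /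
            (z i + finsetEsymm (S.erase i) (k + 1) z / finsetEsymm (S.erase i) k z)
            = z i * finsetEsymm (S.erase i) (k + 1) z / finsetEsymm S (k + 1) z := by
          intro i hi
          have := (hz.erase hi k le_rfl).ne'
          rw [hpos i hi]
          field_simp
        rw [Finset.sum_congr rfl this, ← Finset.sum_div, sum_mul_finsetEsymm_erase]
        push_cast
        have hk : (k : ℝ) + 2 ≠ 0 := by positivity
        field_simp
        ring
      · rw [hpos i hi]
        exact div_pos hz1 (hz.erase hi k le_rfl)
    have hratio : finsetEsymm S (k + 2) x / finsetEsymm S (k + 1) x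
        + finsetEsymm S (k + 2) y / finsetEsymm S (k + 1) y
        ≤ finsetEsymm S (k + 2) (x + y) / finsetEsymm S (k + 1) (x + y) := by
      rw [(key x hxk).1, (key y hyk).1, (key _ hxy).1, ← add_div, ← Finset.sum_add_distrib]
      refine div_le_div_of_nonneg_right (Finset.sum_le_sum fun i hi => ?_) (by positivity)
      exact harmonic_sum_superadditive ((key x hxk).2 i hi) ((key y hyk).2 i hi)
        (ih (hx.erase hi) (hy.erase hi)).2
    refine ⟨fun j hj => ?_, hratio⟩
    rcases Nat.lt_or_ge j (k + 2) with h | h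
    · exact hxy j (by omega)
    · obtain rfl : j = k + 2 := by omega
      have hp : 0 < finsetEsymm S (k + 2) (x + y) / finsetEsymm S (k + 1) (x + y) :=
        (add_pos (div_pos (hx _ le_rfl) (hx _ (by omega)))
          (div_pos (hy _ le_rfl) (hy _ (by omega)))).trans_le hratio
      exact (div_pos_iff_of_pos_right (hxy _ le_rfl)).1 hp

theorem InGardingCone.one_add_smul_le {S : Finset ι} {k : ℕ} {x y : ι → ℝ}
    (hx : InGardingCone S k x) (hy : InGardingCone S k y) {s : ℝ} (hs : 0 < s) :
    finsetEsymm S k x * (1 + s * ∑ j ∈ Finset.range k,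
      (finsetEsymm S (j + 1) y / finsetEsymm S j y) / (finsetEsymm S (j + 1) x / finsetEsymm S j x))
      ≤ finsetEsymm S k (x + s • y) := by
  induction k with
  | zero => simp [finsetEsymm_zero]
  | succ k ih =>
    have hx' := hx.mono (Nat.le_succ k)
    have hy' := hy.mono (Nat.le_succ k)
    have h := ih hx' hy'
    have hr := (hx.add_and_ratio (hy.smul hs)).2
    have hxy := (hx.add_and_ratio (hy.smul hs)).1 k (Nat.le_succ k)
    rw [finsetEsymm_smul, finsetEsymm_smul] at hr
    rw [Finset.sum_range_succ]
    have hr0 : 0 ≤ ∑ j ∈ Finset.range k, (finsetEsymm S (j + 1) y / finsetEsymm S j y) /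
        (finsetEsymm S (j + 1) x / finsetEsymm S j x) := by
      refine Finset.sum_nonneg fun j hj => ?_
      have hj := Finset.mem_range.1 hj
      have h1 := hx (j + 1) (by omega)
      have h2 := hx j (by omega)
      have h3 := hy (j + 1) (by omega)
      have h4 := hy j (by omega)
      positivity
    set r := ∑ j ∈ Finset.range k, (finsetEsymm S (j + 1) y / finsetEsymm S j y) /
        (finsetEsymm S (j + 1) x / finsetEsymm S j x)
    have h1 := hx (k + 1) le_rfl
    have h2 := hx k (by omega)
    have h3 := hy (k + 1) le_rfl
    have h4 := hy k (by omega)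
    set a := finsetEsymm S (k + 1) x
    set b := finsetEsymm S k x
    set c := finsetEsymm S (k + 1) y
    set d := finsetEsymm S k y
    rw [show s ^ (k + 1) * c / (s ^ k * d) = s * (c / d) by
      rw [pow_succ]; field_simp, le_div_iff₀ hxy] at hr
    refine le_trans ?_ ((mul_le_mul_of_nonneg_left h ?_).trans hr)
    · have e : (a / b + s * (c / d)) * (b * (1 + s * r)) - a * (1 + s * (r + c / d / (a / b)))
          = s * s * (c / d) * b * r := by
        field_simp
        ring
      have : 0 ≤ s * s * (c / d) * b * r := by positivity
      linarith
    · positivity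

/-- Gårding's inequality on the open cone. -/
theorem garding_inequality_of_inGardingCone {S : Finset ι} {k : ℕ} {x y : ι → ℝ}
    (hx : InGardingCone S (k + 1) x) (hy : InGardingCone S (k + 1) y) :
    finsetEsymm S (k + 1) x * ((k + 1) *
      (finsetEsymm S (k + 1) y / finsetEsymm S (k + 1) x) ^ (1 / ((k : ℝ) + 1)))
      ≤ ∑ i ∈ S, y i * finsetEsymm (S.erase i) k x := by
  set w : ℕ → ℝ := fun j =>
    (finsetEsymm S (j + 1) y / finsetEsymm S j y) / (finsetEsymm S (j + 1) x / finsetEsymm S j x)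
  have hw : ∀ j ∈ Finset.range (k + 1), 0 ≤ w j := fun j hj => by
    have hj := Finset.mem_range.1 hj
    have h1 := hx (j + 1) (by omega)
    have h2 := hx j (by omega)
    have h3 := hy (j + 1) (by omega)
    have h4 := hy j (by omega)
    positivity
  have hprod : ∏ j ∈ Finset.range (k + 1), w j
      = finsetEsymm S (k + 1) y / finsetEsymm S (k + 1) x := by
    rw [Finset.prod_div_distrib, hx.prod_ratio, hy.prod_ratio]
  have hamgm := Real.geom_mean_le_arith_mean (Finset.range (k + 1)) (fun _ => 1) w
    (fun _ _ => zero_le_one) (by simp; positivity) hw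
  simp only [Real.rpow_one, Finset.sum_const, Finset.card_range, nsmul_eq_mul, mul_one, one_mul,
    hprod] at hamgm
  push_cast at hamgm
  rw [le_div_iff₀ (by positivity), ← one_div] at hamgm
  have hd := hasDerivAt_finsetEsymm S k x y 0
  simp only [zero_smul, add_zero] at hd
  have hslope := hd.tendsto_slope_zero_right
  have hx0 := hx (k + 1) le_rfl
  refine (mul_le_mul_of_nonneg_left ((mul_comm _ _).trans_le hamgm) hx0.le).trans ?_
  refine ge_of_tendsto hslope ?_
  filter_upwards [self_mem_nhdsWithin] with s hs
  have hs : 0 < s := hs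
  have : finsetEsymm S (k + 1) x * (1 + s * ∑ j ∈ Finset.range (k + 1), w j)
      ≤ finsetEsymm S (k + 1) (x + s • y) := hx.one_add_smul_le hy hs
  simp only [zero_add, zero_smul, add_zero, smul_eq_mul]
  rw [inv_mul_eq_div, le_div_iff₀ hs]
  linarith

end GardingCone

section Extremal

variable {ι : Type*}

open Filter Topology

theorem tendsto_finsetEsymm_shift (S : Finset ι) (k : ℕ) (x : ι → ℝ) :
    Tendsto (fun t : ℝ => finsetEsymm S k (x + t • (1 : ι → ℝ))) (𝓝[>] 0)
      (𝓝 (finsetEsymm S k x)) :=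
  ((continuous_finsetEsymm S k).tendsto x).comp (tendsto_shift x)

theorem finsetEsymm_indicator_eq_zero {S U : Finset ι} [DecidableEq ι] {k : ℕ}
    (h : (S ∩ U).card < k) :
    finsetEsymm S k (fun i => if i ∈ U then 1 else 0) = 0 := by
  refine Finset.sum_eq_zero fun s hs => ?_
  obtain ⟨h1, h2⟩ := Finset.mem_powersetCard.1 hs
  obtain ⟨i, hi, hiU⟩ : ∃ i ∈ s, i ∉ U := by
    by_contra! hc
    have := Finset.card_le_card (Finset.subset_inter h1 hc)
    omega
  exact Finset.prod_eq_zero hi (if_neg hiU)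

theorem finsetEsymm_indicator_pos {S U : Finset ι} [DecidableEq ι] (h : U ⊆ S) :
    0 < finsetEsymm S U.card (fun i => if i ∈ U then 1 else 0) := by
  refine Finset.sum_pos' (fun s _ => Finset.prod_nonneg fun i _ => ?_)
    ⟨U, Finset.mem_powersetCard.2 ⟨h, rfl⟩, ?_⟩
  · split_ifs <;> norm_num
  · rw [Finset.prod_congr rfl fun i hi => if_pos hi]
    simp

variable [DecidableEq ι]

/-- Gårding's inequality, normalized, up to the boundary of the cone. -/
theorem garding_inequality_s15 {S : Finset ι} {k : ℕ} (hk : k + 1 ≤ S.card) {x y : ι → ℝ}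
    (hx : InGardingCone S (k + 1) x) (hx1 : finsetEsymm S (k + 1) x = 1)
    (hy : InClosedGardingCone S (k + 1) y) :
    (k + 1) * finsetEsymm S (k + 1) y ^ (1 / ((k : ℝ) + 1))
      ≤ ∑ i ∈ S, y i * finsetEsymm (S.erase i) k x := by
  have hpow : (0 : ℝ) ≤ 1 / ((k : ℝ) + 1) := by positivity
  have hl := (((Real.continuous_rpow_const hpow).tendsto _).comp
    (tendsto_finsetEsymm_shift S (k + 1) y)).const_mul ((k : ℝ) + 1)
  have hc : Continuous fun z : ι → ℝ => ∑ i ∈ S, z i * finsetEsymm (S.erase i) k x := by fun_prop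
  refine le_of_tendsto_of_tendsto hl ((hc.tendsto y).comp (tendsto_shift y)) ?_
  filter_upwards [self_mem_nhdsWithin] with t ht
  have := garding_inequality_of_inGardingCone hx (inGardingCone_shift hk hy ht)
  rwa [hx1, one_mul, div_one] at this

theorem exists_normalized {S : Finset ι} {k : ℕ} {x : ι → ℝ} (hx : InGardingCone S (k + 1) x)
    (y : ι → ℝ) :
    ∃ z, InGardingCone S (k + 1) z ∧ finsetEsymm S (k + 1) z = 1 ∧
      ∑ i ∈ S, y i * finsetEsymm (S.erase i) k z
        = ((finsetEsymm S (k + 1) x ^ (1 / ((k : ℝ) + 1)))⁻¹) ^ k *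
          ∑ i ∈ S, y i * finsetEsymm (S.erase i) k x := by
  have h := hx (k + 1) le_rfl
  have hr : 0 < finsetEsymm S (k + 1) x ^ (1 / ((k : ℝ) + 1)) := Real.rpow_pos_of_pos h _
  refine ⟨(finsetEsymm S (k + 1) x ^ (1 / ((k : ℝ) + 1)))⁻¹ • x, hx.smul (inv_pos.2 hr), ?_, ?_⟩
  · rw [finsetEsymm_smul, inv_pow, ← Real.rpow_natCast, ← Real.rpow_mul h.le]
    push_cast
    rw [one_div_mul_cancel (by positivity), Real.rpow_one, inv_mul_cancel₀ h.ne']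
  · rw [Finset.mul_sum]
    refine Finset.sum_congr rfl fun i _ => ?_
    rw [finsetEsymm_smul]
    ring

theorem exists_lt_of_inClosedGardingCone {S : Finset ι} {k : ℕ} (hk : k + 1 ≤ S.card) {y : ι → ℝ}
    (hy : InClosedGardingCone S (k + 1) y) {b : ℝ}
    (hb : (k + 1) * finsetEsymm S (k + 1) y ^ (1 / ((k : ℝ) + 1)) < b) :
    ∃ z, InGardingCone S (k + 1) z ∧ finsetEsymm S (k + 1) z = 1 ∧
      ∑ i ∈ S, y i * finsetEsymm (S.erase i) k z < b := by
  have hpow : (0 : ℝ) ≤ 1 / ((k : ℝ) + 1) := by positivity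
  have hl := (((Real.continuous_rpow_const hpow).tendsto _).comp
    (tendsto_finsetEsymm_shift S (k + 1) y)).const_mul ((k : ℝ) + 1)
  obtain ⟨t, htb, ht⟩ := ((hl.eventually_lt_const hb).and self_mem_nhdsWithin).exists
  have ht : 0 < t := ht
  set x := y + t • (1 : ι → ℝ) with hxdef
  have hx : InGardingCone S (k + 1) x := inGardingCone_shift hk hy ht
  have h := hx (k + 1) le_rfl
  obtain ⟨z, hz, hz1, hzv⟩ := exists_normalized hx y
  refine ⟨z, hz, hz1, lt_of_le_of_lt ?_ htb⟩
  rw [hzv]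
  change _ ≤ ((k : ℝ) + 1) * finsetEsymm S (k + 1) x ^ (1 / ((k : ℝ) + 1))
  have hr : 0 < finsetEsymm S (k + 1) x ^ (1 / ((k : ℝ) + 1)) := Real.rpow_pos_of_pos h _
  have hrp : finsetEsymm S (k + 1) x
      = (finsetEsymm S (k + 1) x ^ (1 / ((k : ℝ) + 1))) ^ (k + 1) := by
    rw [← Real.rpow_natCast, ← Real.rpow_mul h.le]
    push_cast
    rw [one_div_mul_cancel (by positivity), Real.rpow_one]
  have hD : ∑ i ∈ S, y i * finsetEsymm (S.erase i) k x ≤ (k + 1) * finsetEsymm S (k + 1) x := by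
    rw [← sum_mul_finsetEsymm_erase]
    refine Finset.sum_le_sum fun i hi => mul_le_mul_of_nonneg_right ?_ (hx.erase hi k le_rfl).le
    simp [hxdef, ht.le]
  refine (mul_le_mul_of_nonneg_left hD (by positivity)).trans_eq ?_
  set r := finsetEsymm S (k + 1) x ^ (1 / ((k : ℝ) + 1))
  rw [hrp, inv_pow, pow_succ]
  field_simp

theorem exists_boundary_of_not_inClosedGardingCone {S : Finset ι} {k : ℕ} (hk : k + 1 ≤ S.card)
    {y : ι → ℝ} (hy : ¬ InClosedGardingCone S (k + 1) y) :
    ∃ x, InClosedGardingCone S (k + 1) x ∧ finsetEsymm S (k + 1) x = 0 ∧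
      ∑ i ∈ S, y i * finsetEsymm (S.erase i) k x < 0 := by
  rcases le_or_gt (S.filter fun i => 0 ≤ y i).card k with hT | hT
  · obtain ⟨U, hTU, hUS, hUk⟩ :=
      Finset.exists_subsuperset_card_eq (Finset.filter_subset _ S) hT (show k ≤ S.card by omega)
    have hlt : ∀ i ∈ S, i ∉ U → y i < 0 := fun i hi hiU => by
      by_contra! h
      exact hiU (hTU (Finset.mem_filter.2 ⟨hi, h⟩))
    have hpos : ∀ i ∈ S, i ∉ U →
        0 < finsetEsymm (S.erase i) k (fun i => if i ∈ U then 1 else 0) := fun i hi hiU => by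
      have := finsetEsymm_indicator_pos (Finset.subset_erase.2 ⟨hUS, hiU⟩)
      rwa [hUk] at this
    have hzero : ∀ i ∈ U, finsetEsymm (S.erase i) k (fun i => if i ∈ U then 1 else 0) = 0 :=
      fun i hi => finsetEsymm_indicator_eq_zero <| by
        rw [← hUk]
        refine Finset.card_lt_card ⟨Finset.inter_subset_right, fun h => ?_⟩
        exact Finset.notMem_erase i S (Finset.mem_inter.1 (h hi)).1
    refine ⟨fun i => if i ∈ U then 1 else 0, fun j _ => finsetEsymm_nonneg S j fun i _ => ?_,
      finsetEsymm_indicator_eq_zero ?_, Finset.sum_neg' (fun i hi => ?_) ?_⟩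
    · split_ifs <;> norm_num
    · have := Finset.card_le_card (Finset.inter_subset_right (s₁ := S) (s₂ := U))
      omega
    · by_cases hiU : i ∈ U
      · rw [hzero i hiU, mul_zero]
      · exact (mul_neg_of_neg_of_pos (hlt i hi hiU) (hpos i hi hiU)).le
    · obtain ⟨i, hi, hiU⟩ :=
          Finset.exists_mem_notMem_of_card_lt_card (show U.card < S.card by omega)
      exact ⟨i, hi, mul_neg_of_neg_of_pos (hlt i hi hiU) (hpos i hi hiU)⟩
  · have hcont : Continuous fun t : ℝ => y + t • (1 : ι → ℝ) := by fun_prop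
    set V : Set ℝ := {t | 0 ≤ t ∧ InClosedGardingCone S (k + 1) (y + t • (1 : ι → ℝ))} with hV
    have hVc : IsClosed V :=
      isClosed_Ici.inter ((isClosed_inClosedGardingCone S (k + 1)).preimage hcont)
    have hVb : BddBelow V := ⟨0, fun t ht => ht.1⟩
    have hVn : V.Nonempty := by
      refine ⟨∑ i ∈ S, |y i|, Finset.sum_nonneg fun i _ => abs_nonneg _, fun j _ =>
        finsetEsymm_nonneg S j fun i hi => ?_⟩
      have h1 := Finset.single_le_sum (f := fun i => |y i|) (fun i _ => abs_nonneg _) hi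
      have h2 := neg_abs_le (y i)
      simp only [Pi.add_apply, Pi.smul_apply, Pi.one_apply, smul_eq_mul, mul_one]
      linarith
    obtain ⟨h0, hμ⟩ := hVc.csInf_mem hVn hVb
    set t₀ := sInf V with ht₀
    have hpos : 0 < t₀ := by
      refine lt_of_le_of_ne h0 fun h => hy ?_
      rwa [← h, zero_smul, add_zero] at hμ
    set x := y + t₀ • (1 : ι → ℝ) with hx
    have hEpos : ∀ j ≤ k, 0 < finsetEsymm S j x := fun j hj => by
      refine finsetEsymm_pos_of_pos_coords (by omega) (hμ.mono (show j + 1 ≤ k + 1 by omega))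
        (Finset.filter_subset (fun i => 0 ≤ y i) S) (by omega) fun i hi => ?_
      have := (Finset.mem_filter.1 hi).2
      simp only [hx, Pi.add_apply, Pi.smul_apply, Pi.one_apply, smul_eq_mul, mul_one]
      linarith
    have hE : finsetEsymm S (k + 1) x = 0 := by
      refine le_antisymm (not_lt.1 fun h => ?_) (hμ (k + 1) le_rfl)
      have hmem : InGardingCone S (k + 1) x := fun j hj => by
        rcases Nat.lt_or_ge k j with h' | h'
        · obtain rfl : j = k + 1 := by omega
          exact h
        · exact hEpos j h'
      have hev : ∀ᶠ t in 𝓝 t₀, InGardingCone S (k + 1) (y + t • (1 : ι → ℝ)) :=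
        ((isOpen_inGardingCone S (k + 1)).preimage hcont).mem_nhds hmem
      obtain ⟨t, ht, ht'⟩ :=
        ((hev.filter_mono nhdsWithin_le_nhds).and (Ioo_mem_nhdsLT hpos)).exists
      exact absurd (csInf_le hVb ⟨ht'.1.le, fun j hj => (ht j hj).le⟩) (not_le.2 ht'.2)
    refine ⟨x, hμ, hE, ?_⟩
    have hy' : ∀ i ∈ S, y i * finsetEsymm (S.erase i) k x
        = x i * finsetEsymm (S.erase i) k x - t₀ * finsetEsymm (S.erase i) k x := fun i _ => by
      simp only [hx, Pi.add_apply, Pi.smul_apply, Pi.one_apply, smul_eq_mul, mul_one]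
      ring
    rw [Finset.sum_congr rfl hy', Finset.sum_sub_distrib, sum_mul_finsetEsymm_erase, hE,
      ← Finset.mul_sum, sum_finsetEsymm_erase]
    have : (0 : ℝ) < S.card - k := by
      rw [sub_pos]
      exact_mod_cast (show k < S.card by omega)
    have := mul_pos hpos (mul_pos this (hEpos k le_rfl))
    linarith

theorem exists_lt_of_not_inClosedGardingCone {S : Finset ι} {k : ℕ} (hk0 : k ≠ 0)
    (hk : k + 1 ≤ S.card) {y : ι → ℝ} (hy : ¬ InClosedGardingCone S (k + 1) y) (b : ℝ) :
    ∃ z, InGardingCone S (k + 1) z ∧ finsetEsymm S (k + 1) z = 1 ∧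
      ∑ i ∈ S, y i * finsetEsymm (S.erase i) k z < b := by
  obtain ⟨x, hx, hx0, hD⟩ := exists_boundary_of_not_inClosedGardingCone hk hy
  have hpow : (0 : ℝ) < 1 / ((k : ℝ) + 1) := by positivity
  have hcone : ∀ᶠ t : ℝ in 𝓝[>] 0, InGardingCone S (k + 1) (x + t • (1 : ι → ℝ)) := by
    filter_upwards [self_mem_nhdsWithin] with t ht
    exact inGardingCone_shift hk hx ht
  have hroot : Tendsto
      (fun t : ℝ => finsetEsymm S (k + 1) (x + t • (1 : ι → ℝ)) ^ (1 / ((k : ℝ) + 1)))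
      (𝓝[>] 0) (𝓝[>] 0) := by
    refine tendsto_nhdsWithin_iff.2 ⟨?_, hcone.mono fun t ht =>
      Real.rpow_pos_of_pos (ht _ le_rfl) _⟩
    have := ((Real.continuous_rpow_const hpow.le).tendsto _).comp
      (tendsto_finsetEsymm_shift S (k + 1) x)
    rwa [hx0, Real.zero_rpow hpow.ne'] at this
  have hc : Continuous fun z : ι → ℝ => ∑ i ∈ S, y i * finsetEsymm (S.erase i) k z :=
    continuous_finsetSum _ fun i _ => (continuous_finsetEsymm _ _).const_mul _
  have hlim := ((tendsto_pow_atTop hk0).comp (tendsto_inv_nhdsGT_zero.comp hroot)).atTop_mul_neg hD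
    ((hc.tendsto x).comp (tendsto_shift x))
  obtain ⟨t, ht, htb⟩ := (hcone.and (hlim.eventually_lt_atBot b)).exists
  obtain ⟨z, hz, hz1, hzv⟩ := exists_normalized ht y
  exact ⟨z, hz, hz1, hzv.trans_lt htb⟩

end Extremal

theorem finsetEsymm_map {ι : Type*} (p : Equiv.Perm ι) (S : Finset ι) (k : ℕ) (x : ι → ℝ) :
    finsetEsymm (S.map p.toEmbedding) k x = finsetEsymm S k (x ∘ p) := by
  simp [finsetEsymm, Finset.powersetCard_map]

theorem finsetEsymm_univ_comp {ι : Type*} [Fintype ι] (p : Equiv.Perm ι) (k : ℕ) (x : ι → ℝ) :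
    finsetEsymm Finset.univ k (x ∘ p) = finsetEsymm Finset.univ k x := by
  rw [← finsetEsymm_map, Finset.map_univ_equiv]

theorem finsetEsymm_univ_erase_comp {ι : Type*} [Fintype ι] [DecidableEq ι] (p : Equiv.Perm ι)
    (k : ℕ) (x : ι → ℝ) (i : ι) :
    finsetEsymm (Finset.univ.erase i) k (x ∘ p) = finsetEsymm (Finset.univ.erase (p i)) k x := by
  rw [← finsetEsymm_map, Finset.map_erase, Finset.map_univ_equiv]
  rfl

theorem finsetEsymm_update_zero {ι : Type*} [DecidableEq ι] {S : Finset ι} {i : ι} (hi : i ∈ S)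
    (k : ℕ) (x : ι → ℝ) :
    finsetEsymm S (k + 1) (Function.update x i 0) = finsetEsymm (S.erase i) (k + 1) x := by
  rw [finsetEsymm_erase hi, Function.update_self, zero_mul, add_zero]
  exact finsetEsymm_congr _ _ fun j hj => Function.update_of_ne (Finset.ne_of_mem_erase hj) _ _

theorem exists_perm_of_map_eq {ι α : Type*} [Fintype ι] {f g : ι → α}
    (h : Finset.univ.val.map f = Finset.univ.val.map g) :
    ∃ e : Equiv.Perm ι, ∀ i, f i = g (e i) := by
  classical
  have hc : ∀ c, Nonempty ({i // f i = c} ≃ {i // g i = c}) := fun c => by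
    refine ⟨Fintype.equivOfCardEq ?_⟩
    have := congrArg (Multiset.count c) h
    rw [Multiset.count_map, Multiset.count_map] at this
    rw [Fintype.card_subtype, Fintype.card_subtype, Finset.card_def, Finset.card_def]
    simpa only [Finset.filter_val, eq_comm] using this
  exact ⟨Equiv.ofFiberEquiv fun c => (hc c).some,
    fun i => (Equiv.ofFiberEquiv_map (fun c => (hc c).some) i).symm⟩

section Trace

variable {ι : Type*} [Fintype ι] [DecidableEq ι]

theorem Matrix.IsHermitian.eq_conj_diagonal {A : Matrix ι ι ℝ} (hA : A.IsHermitian) :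
    A = (hA.eigenvectorUnitary : Matrix ι ι ℝ) * diagonal hA.eigenvalues *
      (hA.eigenvectorUnitary : Matrix ι ι ℝ)ᵀ := by
  conv_lhs => rw [hA.spectral_theorem, Unitary.conjStarAlgAut_apply]
  rfl

theorem sq_mem_doublyStochastic {W : Matrix ι ι ℝ} (h : W * Wᵀ = 1) :
    (of fun i j => W i j ^ 2) ∈ doublyStochastic ℝ ι := by
  have h' : Wᵀ * W = 1 := mul_eq_one_comm.1 h
  refine mem_doublyStochastic_iff_sum.2 ⟨fun i j => sq_nonneg _, fun i => ?_, fun j => ?_⟩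
  · have := congrFun (congrFun h i) i
    simpa [mul_apply, sq] using this
  · have := congrFun (congrFun h' j) j
    simpa [mul_apply, sq] using this

theorem trace_diagonal_mul_conj (W : Matrix ι ι ℝ) (d a : ι → ℝ) :
    (diagonal d * (W * diagonal a * Wᵀ)).trace = ∑ i, ∑ j, d i * a j * W i j ^ 2 := by
  simp only [trace, diag_apply, diagonal_mul]
  refine Finset.sum_congr rfl fun i _ => ?_
  rw [mul_apply, Finset.mul_sum]
  refine Finset.sum_congr rfl fun j _ => ?_
  rw [mul_diagonal, transpose_apply]
  ring

/-- Marcus' rearrangement inequality for the trace of a product of conjugated diagonal matrices. -/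
theorem le_trace_diagonal_mul_conj {W : Matrix ι ι ℝ} (h : W * Wᵀ = 1) (d a : ι → ℝ) {b : ℝ}
    (hb : ∀ p : Equiv.Perm ι, b ≤ ∑ i, d i * a (p i)) :
    b ≤ (diagonal d * (W * diagonal a * Wᵀ)).trace := by
  obtain ⟨w, hw0, hw1, hw⟩ := exists_eq_sum_perm_of_mem_doublyStochastic (sq_mem_doublyStochastic h)
  have hW : ∀ i j, W i j ^ 2 = ∑ p : Equiv.Perm ι, w p * (if p i = j then 1 else 0) := fun i j => by
    have := congrFun (congrFun hw i) j
    simp only [of_apply] at this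
    rw [← this]
    simp [Matrix.sum_apply, Equiv.Perm.permMatrix, PEquiv.toMatrix_apply, Equiv.toPEquiv_apply]
  have e : (diagonal d * (W * diagonal a * Wᵀ)).trace
      = ∑ p : Equiv.Perm ι, w p * ∑ i, d i * a (p i) := by
    rw [trace_diagonal_mul_conj]
    simp only [hW, Finset.mul_sum]
    rw [Finset.sum_congr rfl fun i _ => Finset.sum_comm, Finset.sum_comm]
    refine Finset.sum_congr rfl fun p _ => Finset.sum_congr rfl fun i _ => ?_
    simp
    ring
  rw [e, ← one_mul b, ← hw1, Finset.sum_mul]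
  exact Finset.sum_le_sum fun p _ => mul_le_mul_of_nonneg_left (hb p) (hw0 p)

theorem le_trace_transpose_mul_mul {M A : Matrix ι ι ℝ} (hM : M.IsHermitian) (hA : A.IsHermitian)
    {b : ℝ} (hb : ∀ p : Equiv.Perm ι, b ≤ ∑ i, hM.eigenvalues i * hA.eigenvalues (p i) ^ 2) :
    b ≤ (Aᵀ * M * A).trace := by
  set U : Matrix ι ι ℝ := (hM.eigenvectorUnitary : Matrix ι ι ℝ)
  set V : Matrix ι ι ℝ := (hA.eigenvectorUnitary : Matrix ι ι ℝ)
  have hU : Uᵀ * U = 1 := Unitary.coe_star_mul_self hM.eigenvectorUnitary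
  have hV : Vᵀ * V = 1 := Unitary.coe_star_mul_self hA.eigenvectorUnitary
  have hV' : V * Vᵀ = 1 := Unitary.coe_mul_star_self hA.eigenvectorUnitary
  have hAt : Aᵀ = A := hA
  have hAA : A * A = V * diagonal (fun i => hA.eigenvalues i ^ 2) * Vᵀ := by
    conv_lhs => rw [hA.eq_conj_diagonal]
    change V * diagonal hA.eigenvalues * Vᵀ * (V * diagonal hA.eigenvalues * Vᵀ) = _
    calc _ = V * diagonal hA.eigenvalues * (Vᵀ * V) * diagonal hA.eigenvalues * Vᵀ := by
          simp only [Matrix.mul_assoc]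
      _ = _ := by
          rw [hV, Matrix.mul_one, Matrix.mul_assoc V, diagonal_mul_diagonal]
          simp only [sq]
  have e : (Aᵀ * M * A).trace = (diagonal hM.eigenvalues *
      ((Uᵀ * V) * diagonal (fun i => hA.eigenvalues i ^ 2) * (Uᵀ * V)ᵀ)).trace := by
    rw [hAt, Matrix.mul_assoc, trace_mul_comm, Matrix.mul_assoc, hAA]
    conv_lhs => rw [hM.eq_conj_diagonal]
    change (U * diagonal hM.eigenvalues * Uᵀ * _).trace = _
    rw [Matrix.mul_assoc, Matrix.mul_assoc, trace_mul_comm]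
    simp only [transpose_mul, transpose_transpose, Matrix.mul_assoc]
  rw [e]
  refine le_trace_diagonal_mul_conj ?_ _ _ hb
  rw [transpose_mul, transpose_transpose, Matrix.mul_assoc, ← Matrix.mul_assoc V, hV',
    Matrix.one_mul, hU]

theorem exists_posSemidef_trace_eq {M : Matrix ι ι ℝ} (hM : M.IsHermitian) {a : ι → ℝ}
    (ha : ∀ i, 0 ≤ a i) :
    ∃ (A : Matrix ι ι ℝ) (hA : A.IsHermitian), A.PosSemidef ∧
      (∃ e : Equiv.Perm ι, ∀ i, hA.eigenvalues i ^ 2 = a (e i)) ∧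
      (Aᵀ * M * A).trace = ∑ i, hM.eigenvalues i * a i := by
  set U : Matrix ι ι ℝ := (hM.eigenvectorUnitary : Matrix ι ι ℝ)
  have hU : Uᵀ * U = 1 := Unitary.coe_star_mul_self hM.eigenvectorUnitary
  set D : Matrix ι ι ℝ := diagonal fun i => √(a i) with hD
  have hP : (U * D * Uᵀ).PosSemidef := by
    have : D.PosSemidef := PosSemidef.diagonal fun i => Real.sqrt_nonneg _
    exact this.mul_mul_conjTranspose_same U
  refine ⟨U * D * Uᵀ, hP.isHermitian, hP, ?_, ?_⟩
  · have hroots : (U * D * Uᵀ).charpoly.roots = Finset.univ.val.map fun i => √(a i) := by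
      rw [charpoly_mul_comm, ← Matrix.mul_assoc, hU, Matrix.one_mul, hD, charpoly_diagonal,
        Polynomial.roots_prod _ _
          (Finset.prod_ne_zero_iff.2 fun i _ => Polynomial.X_sub_C_ne_zero _)]
      simp
    rw [hP.isHermitian.roots_charpoly_eq_eigenvalues] at hroots
    obtain ⟨e, he⟩ := exists_perm_of_map_eq hroots
    refine ⟨e, fun i => ?_⟩
    have : hP.isHermitian.eigenvalues i = √(a (e i)) := he i
    rw [this, Real.sq_sqrt (ha _)]
  · have hDD : D * D = diagonal a := by
      rw [hD, diagonal_mul_diagonal]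
      simp only [Real.mul_self_sqrt (ha _)]
    have hDt : Dᵀ = D := diagonal_transpose _
    conv_lhs => rw [hM.eq_conj_diagonal]
    change ((U * D * Uᵀ)ᵀ * (U * diagonal hM.eigenvalues * Uᵀ) * (U * D * Uᵀ)).trace = _
    calc _ = (U * (D * (Uᵀ * U) * diagonal hM.eigenvalues * (Uᵀ * U) * D * Uᵀ)).trace := by
          simp only [transpose_mul, transpose_transpose, hDt, Matrix.mul_assoc]
      _ = (diagonal hM.eigenvalues * diagonal a).trace := by
          rw [hU, trace_mul_comm, Matrix.mul_assoc, hU, Matrix.mul_one, Matrix.mul_one,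
            Matrix.mul_one, Matrix.mul_assoc, trace_mul_comm, Matrix.mul_assoc, hDD]
      _ = _ := by simp [diagonal_mul_diagonal, trace_diagonal]

end Trace

theorem esymm_pos_iff_inGardingCone {n k : ℕ} {x : Fin n → ℝ} :
    (∀ j, 1 ≤ j → j ≤ k → 0 < esymm n j x) ↔ InGardingCone Finset.univ k x := by
  refine ⟨fun h j hj => ?_, fun h j _ hj => h j hj⟩
  rcases Nat.eq_zero_or_pos j with rfl | hj0
  · rw [finsetEsymm_zero]
    exact one_pos
  · exact h j hj0 hj

theorem esymm_nonneg_iff_inClosedGardingCone {n k : ℕ} {x : Fin n → ℝ} :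
    (∀ j, 1 ≤ j → j ≤ k → 0 ≤ esymm n j x) ↔ InClosedGardingCone Finset.univ k x := by
  refine ⟨fun h j hj => ?_, fun h j _ hj => h j hj⟩
  rcases Nat.eq_zero_or_pos j with rfl | hj0
  · rw [finsetEsymm_zero]
    exact zero_le_one
  · exact h j hj0 hj

theorem stmt_15 (n k : ℕ) (hk2 : 2 ≤ k) (hkn : k ≤ n)
    (M : Matrix (Fin n) (Fin n) ℝ) (hM : M.IsHermitian) :
    ((∀ j, 1 ≤ j → j ≤ k → 0 ≤ esymm n j hM.eigenvalues) →
      (⨅ A ∈ {A : Matrix (Fin n) (Fin n) ℝ |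
          ∃ hA : A.IsHermitian, A.PosSemidef ∧
            ∃ γ : Fin n → ℝ, (∀ j, 1 ≤ j → j ≤ k → 0 < esymm n j γ) ∧
              esymm n k γ = 1 ∧ ∃ e : Equiv.Perm (Fin n),
                ∀ i, (hA.eigenvalues i) ^ 2
                  = esymm n (k - 1) (Function.update γ (e i) 0)},
          (((Aᵀ * M * A).trace : ℝ) : EReal))
        = (((k : ℝ) * esymm n k hM.eigenvalues ^ (1 / (k : ℝ)) : ℝ) : EReal)) ∧
    (¬ (∀ j, 1 ≤ j → j ≤ k → 0 ≤ esymm n j hM.eigenvalues) →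
      (⨅ A ∈ {A : Matrix (Fin n) (Fin n) ℝ |
          ∃ hA : A.IsHermitian, A.PosSemidef ∧
            ∃ γ : Fin n → ℝ, (∀ j, 1 ≤ j → j ≤ k → 0 < esymm n j γ) ∧
              esymm n k γ = 1 ∧ ∃ e : Equiv.Perm (Fin n),
                ∀ i, (hA.eigenvalues i) ^ 2
                  = esymm n (k - 1) (Function.update γ (e i) 0)},
          (((Aᵀ * M * A).trace : ℝ) : EReal)) = ⊥) := by
  obtain ⟨m, rfl⟩ : ∃ m, k = m + 1 + 1 := ⟨k - 2, by omega⟩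
  have hcard : m + 1 + 1 ≤ (Finset.univ : Finset (Fin n)).card := by
    rwa [Finset.card_univ, Fintype.card_fin]
  have hupd : ∀ (x : Fin n → ℝ) (i : Fin n), esymm n (m + 1 + 1 - 1) (Function.update x i 0)
      = finsetEsymm (Finset.univ.erase i) (m + 1) x :=
    fun x i => finsetEsymm_update_zero (Finset.mem_univ i) m x
  simp only [hupd, esymm_pos_iff_inGardingCone, esymm_nonneg_iff_inClosedGardingCone]
  have key : ∀ (b : ℝ) (z : Fin n → ℝ), InGardingCone Finset.univ (m + 1 + 1) z →
      finsetEsymm Finset.univ (m + 1 + 1) z = 1 →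
      ∑ i, hM.eigenvalues i * finsetEsymm (Finset.univ.erase i) (m + 1) z < b →
      (⨅ A ∈ {A : Matrix (Fin n) (Fin n) ℝ |
          ∃ hA : A.IsHermitian, A.PosSemidef ∧
            ∃ γ : Fin n → ℝ, InGardingCone Finset.univ (m + 1 + 1) γ ∧
              esymm n (m + 1 + 1) γ = 1 ∧ ∃ e : Equiv.Perm (Fin n),
                ∀ i, (hA.eigenvalues i) ^ 2 = finsetEsymm (Finset.univ.erase (e i)) (m + 1) γ},
          (((Aᵀ * M * A).trace : ℝ) : EReal)) < (b : EReal) := by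
    intro b z hz hz1 hb
    obtain ⟨A, hA, hA0, ⟨e, he⟩, htr⟩ := exists_posSemidef_trace_eq hM
      (a := fun i => finsetEsymm (Finset.univ.erase i) (m + 1) z)
      fun i => (InGardingCone.erase hz (Finset.mem_univ i) (m + 1) le_rfl).le
    refine (iInf₂_le A ⟨hA, hA0, z, hz, hz1, e, he⟩).trans_lt ?_
    rw [htr]
    exact_mod_cast hb
  refine ⟨fun hy => le_antisymm ?_ ?_, fun hy => ?_⟩
  · refine EReal.le_of_forall_lt_iff_le.1 fun b hb => ?_
    have hb' := EReal.coe_lt_coe_iff.1 hb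
    obtain ⟨z, hz, hz1, hzb⟩ := exists_lt_of_inClosedGardingCone hcard hy (b := b)
      (by rw [Nat.cast_succ (m + 1)] at hb'; exact hb')
    exact (key b z hz hz1 hzb).le
  · refine le_iInf₂ fun A ⟨hA, _, γ, hγ, hγ1, e, he⟩ => ?_
    rw [EReal.coe_le_coe_iff]
    refine le_trace_transpose_mul_mul hM hA fun p => ?_
    simp only [he]
    have h := garding_inequality_s15 hcard (x := γ ∘ (p.trans e))
      (fun j hj => by rw [finsetEsymm_univ_comp]; exact hγ j hj)
      (by rw [finsetEsymm_univ_comp]; exact hγ1) hy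
    simp only [finsetEsymm_univ_erase_comp] at h
    rw [Nat.cast_succ (m + 1)]
    exact h
  · refine EReal.eq_bot_iff_forall_lt _ |>.2 fun b => ?_
    obtain ⟨z, hz, hz1, hzb⟩ :=
      exists_lt_of_not_inClosedGardingCone m.succ_ne_zero hcard hy b
    exact key b z hz hz1 hzb
end
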